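/- arXiv:2108.00718 — 4 statements merged into one kernel-verified Lean document; each statement's English description precedes it below -/
import Mathlib

section
/- Let n ≥ 1, 1 < p < ∞ and −n < α < n(p−1). Then there exists a constant C > 0 such that for every locally integrable function f : ℝ^n → ℝ, ‖Mf‖_{L^p(|·|^α)} ≤ C ‖f‖_{L^p(|·|^α)}, where M denotes the centered Hardy–Littlewood maximal operator. -/
/-!
The range `-n < α < n(p-1)` is exactly where the power weight `|·|^α` is a Muckenhoupt `A_p` weight,
and it is open in `p`, so the weight is also `A_q` for some `1 < q < p`.

* `A_q` condition (`muckenhoupt_norm_rpow`): for `γ > -n` the integral of `|·|^γ` over `B(x,r)` is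
  at most a constant times `r^n max(|x|,r)^γ` (`lintegral_norm_rpow_ball_le`). Applied with `γ = α`
  and with the dual exponent `γ = -α/(q-1)`, the powers of `max(|x|,r)` cancel.
* Weak type `(q,q)` (`weak_type`): by Hölder's inequality and the `A_q` condition, the `q`-th power
  of the average of `g` over `B(x,r)`, times the weight of `B(x,5r)`, is at most a constant times
  the weighted integral of `g^q` over `B(x,r)` (`key_ineq`). The Vitali covering lemma sums these
  bounds over disjoint balls; no separate doubling property is needed.
* Strong type `(p,p)` (`strong_type`): the layer-cake formula, splitting `g` at height `t/2`, as in
  the Marcinkiewicz interpolation theorem between weak `(q,q)` and `L^∞`.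

The argument is carried out for measurable `ℝ≥0∞`-valued functions `g`; the theorem follows by
replacing `|f|` by a measurable representative, which changes neither side.
-/

open MeasureTheory ENNReal

noncomputable section

/-- The centered Hardy–Littlewood maximal operator
`Mf(x) = sup_{r>0} (1/|B(x,r)|) ∫_{B(x,r)} |f(y)| dy`. -/
noncomputable def maximalFn (n : ℕ) (f : EuclideanSpace ℝ (Fin n) → ℝ)
    (x : EuclideanSpace ℝ (Fin n)) : ℝ≥0∞ :=
  ⨆ r : ℝ, ⨆ _ : 0 < r,
    (volume (Metric.ball x r))⁻¹ * ∫⁻ y in Metric.ball x r, (‖f y‖₊ : ℝ≥0∞)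

/-- Weighted `L^p` "norm" with power weight `|x|^α`, for `ℝ≥0∞`-valued functions. -/
noncomputable def wLpE (n : ℕ) (p α : ℝ) (F : EuclideanSpace ℝ (Fin n) → ℝ≥0∞) : ℝ≥0∞ :=
  (∫⁻ x, F x ^ p * (‖x‖₊ : ℝ≥0∞) ^ α) ^ (1 / p)

/-- Weighted `L^p` norm `(∫ |f(x)|^p |x|^α dx)^(1/p)`. -/
noncomputable def wLp (n : ℕ) (p α : ℝ) (f : EuclideanSpace ℝ (Fin n) → ℝ) : ℝ≥0∞ :=
  wLpE n p α (fun x => (‖f x‖₊ : ℝ≥0∞))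

section

open Metric Set

/-! ### Power weights on balls -/

/-- Integrability of a radial power on the unit ball. -/
lemma lintegral_norm_rpow_unitBall_lt_top (n : ℕ) (hn : 1 ≤ n) (γ : ℝ) (hγ : -(n : ℝ) < γ) :
    ∫⁻ y in ball (0 : EuclideanSpace ℝ (Fin n)) 1, ‖y‖ₑ ^ γ < ∞ := by
  have : Nonempty (Fin n) := ⟨⟨0, hn⟩⟩
  have h1 : IntegrableOn (fun y : EuclideanSpace ℝ (Fin n) => (fun t : ℝ => t ^ γ) ‖y‖)
      (ball 0 1) volume := by
    rw [integrableOn_fun_norm_addHaar volume (f := fun t : ℝ => t ^ γ)]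
    have h2 : IntegrableOn (fun t : ℝ => t ^ ((n : ℝ) - 1 + γ)) (Ioo 0 1) :=
      (intervalIntegral.integrableOn_Ioo_rpow_iff zero_lt_one).2 (by linarith)
    refine h2.congr_fun (fun t ht => ?_) measurableSet_Ioo
    simp only [finrank_euclideanSpace, Fintype.card_fin, smul_eq_mul]
    rw [Real.rpow_add ht.1, ← Nat.cast_one, ← Nat.cast_sub hn, Real.rpow_natCast]
  have h2 := h1.2
  rw [hasFiniteIntegral_iff_enorm] at h2
  refine lt_of_le_of_lt (le_of_eq ?_) h2
  refine lintegral_congr_ae (ae_restrict_of_ae ?_)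
  have h0 : ∀ᵐ y : EuclideanSpace ℝ (Fin n), y ≠ 0 := by
    simp [ae_iff]
  filter_upwards [h0] with y hy
  have hy' : 0 < ‖y‖ := norm_pos_iff.2 hy
  rw [← ofReal_norm, ENNReal.ofReal_rpow_of_pos hy', Real.enorm_of_nonneg (by positivity)]

/-- Scaling of the integral of a radial power over a ball centred at the origin. -/
lemma lintegral_norm_rpow_ball_zero (n : ℕ) (γ R : ℝ) (hR : 0 < R) :
    ∫⁻ y in ball (0 : EuclideanSpace ℝ (Fin n)) R, ‖y‖ₑ ^ γ =
      ENNReal.ofReal (R ^ n * R ^ γ) *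
        ∫⁻ y in ball (0 : EuclideanSpace ℝ (Fin n)) 1, ‖y‖ₑ ^ γ := by
  have hm : Measurable fun y : EuclideanSpace ℝ (Fin n) => ‖y‖ₑ ^ γ := by fun_prop
  have hmap := Measure.map_addHaar_smul (volume : Measure (EuclideanSpace ℝ (Fin n))) hR.ne'
  have hvol : (volume : Measure (EuclideanSpace ℝ (Fin n))) =
      ENNReal.ofReal (R ^ n) • Measure.map (R • ·) volume := by
    rw [hmap, smul_smul, finrank_euclideanSpace, Fintype.card_fin, abs_of_pos (by positivity),
      ← ENNReal.ofReal_mul (by positivity), mul_inv_cancel₀ (by positivity), ENNReal.ofReal_one,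
      one_smul]
  conv_lhs => rw [hvol]
  rw [Measure.restrict_smul, lintegral_smul_measure,
    setLIntegral_map measurableSet_ball hm (by fun_prop)]
  have hpre : (fun y : EuclideanSpace ℝ (Fin n) => R • y) ⁻¹' ball 0 R = ball 0 1 := by
    ext y
    simp [norm_smul, abs_of_pos hR, hR]
  rw [hpre, smul_eq_mul, ENNReal.ofReal_mul (by positivity), mul_assoc,
    ← lintegral_const_mul _ hm]
  congr 1
  refine lintegral_congr fun y => ?_
  rw [enorm_smul, Real.enorm_of_nonneg hR.le,
    ENNReal.mul_rpow_of_ne_top ENNReal.ofReal_ne_top (by simp), ENNReal.ofReal_rpow_of_pos hR]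

/-- Powers of two positive numbers that agree up to a factor `c` agree up to `c ^ |γ|`. -/
lemma rpow_le_of_comparable {c s t γ : ℝ} (hc : 1 ≤ c) (hs : 0 < s) (ht : 0 < t)
    (h1 : s ≤ c * t) (h2 : t ≤ c * s) : s ^ γ ≤ c ^ |γ| * t ^ γ := by
  have hc0 : 0 < c := by linarith
  rcases le_total 0 γ with h | h
  · rw [abs_of_nonneg h, ← Real.mul_rpow hc0.le ht.le]
    exact Real.rpow_le_rpow hs.le h1 h
  · rw [abs_of_nonpos h, Real.rpow_neg hc0.le, ← Real.inv_rpow hc0.le,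
      ← Real.mul_rpow (by positivity) ht.le]
    refine Real.rpow_le_rpow_of_nonpos (by positivity) ?_ h
    rw [inv_mul_le_iff₀ hc0]
    exact h2

/-- The mass of a ball for the weight `|·|^γ`, uniformly in the centre: the weight is essentially
`max |x| r ^ γ` on `B(x,r)`, up to an integrable singularity at the origin. -/
lemma lintegral_norm_rpow_ball_le (n : ℕ) (hn : 1 ≤ n) (γ : ℝ) (hγ : -(n : ℝ) < γ) :
    ∃ K : ℝ, 0 < K ∧ ∀ (x : EuclideanSpace ℝ (Fin n)) (r : ℝ), 0 < r →
      ∫⁻ y in ball x r, ‖y‖ₑ ^ γ ≤ ENNReal.ofReal (K * (r ^ n * (max ‖x‖ r) ^ γ)) := by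
  have : Nonempty (Fin n) := ⟨⟨0, hn⟩⟩
  set I := ∫⁻ y in ball (0 : EuclideanSpace ℝ (Fin n)) 1, ‖y‖ₑ ^ γ with hI
  have hIt : I < ∞ := lintegral_norm_rpow_unitBall_lt_top n hn γ hγ
  set v := volume (ball (0 : EuclideanSpace ℝ (Fin n)) 1) with hv
  have hvt : v < ∞ := measure_ball_lt_top
  have hI' : I = ENNReal.ofReal I.toReal := (ENNReal.ofReal_toReal hIt.ne).symm
  have hv' : v = ENNReal.ofReal v.toReal := (ENNReal.ofReal_toReal hvt.ne).symm
  have hI0 : 0 ≤ I.toReal := ENNReal.toReal_nonneg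
  have hv0 : 0 ≤ v.toReal := ENNReal.toReal_nonneg
  set A : ℝ := 2 ^ |γ| * v.toReal with hA
  set B : ℝ := 3 ^ n * 3 ^ |γ| * I.toReal with hB
  have hA0 : 0 ≤ A := by positivity
  have hB0 : 0 ≤ B := by positivity
  refine ⟨A + B + 1, by positivity, fun x r hr => ?_⟩
  have hm : 0 < max ‖x‖ r := lt_max_of_lt_right hr
  by_cases hxr : 2 * r ≤ ‖x‖
  · have hmax : max ‖x‖ r = ‖x‖ := max_eq_left (by linarith)
    have hx : 0 < ‖x‖ := by linarith
    calc ∫⁻ y in ball x r, ‖y‖ₑ ^ γ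
        ≤ ∫⁻ y in ball x r, ENNReal.ofReal (2 ^ |γ| * ‖x‖ ^ γ) := by
          refine setLIntegral_mono' measurableSet_ball fun y hy => ?_
          rw [mem_ball, dist_eq_norm] at hy
          have h1 := norm_le_norm_add_norm_sub' x y
          have h2 := norm_le_norm_add_norm_sub' y x
          rw [norm_sub_rev] at h1
          have hy0 : 0 < ‖y‖ := by linarith
          rw [← ofReal_norm, ENNReal.ofReal_rpow_of_pos hy0]
          exact ENNReal.ofReal_le_ofReal
            (rpow_le_of_comparable one_le_two hy0 hx (by linarith) (by linarith))
      _ = ENNReal.ofReal (A * (r ^ n * ‖x‖ ^ γ)) := by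
          rw [setLIntegral_const, Measure.addHaar_ball _ _ hr.le, ← hv, hv',
            finrank_euclideanSpace, Fintype.card_fin, ← ENNReal.ofReal_mul (by positivity),
            ← ENNReal.ofReal_mul (by positivity)]
          congr 1
          rw [hA]
          ring
      _ ≤ _ := by
          rw [hmax]
          gcongr
          linarith
  · push Not at hxr
    have hmax : max ‖x‖ r ≤ 2 * r := max_le (by linarith) (by linarith)
    calc ∫⁻ y in ball x r, ‖y‖ₑ ^ γ
        ≤ ∫⁻ y in ball (0 : EuclideanSpace ℝ (Fin n)) (3 * r), ‖y‖ₑ ^ γ := by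
          refine lintegral_mono_set (ball_subset_ball' ?_)
          rw [dist_zero_right]
          linarith
      _ = ENNReal.ofReal ((3 * r) ^ n * (3 * r) ^ γ * I.toReal) := by
          rw [lintegral_norm_rpow_ball_zero n γ (3 * r) (by positivity), ← hI,
            ENNReal.ofReal_mul (q := I.toReal) (by positivity), ← hI']
      _ ≤ _ := by
          refine ENNReal.ofReal_le_ofReal ?_
          have h3 : (3 * r) ^ γ ≤ 3 ^ |γ| * (max ‖x‖ r) ^ γ :=
            rpow_le_of_comparable (by norm_num) (by positivity) hm
              (by gcongr; exact le_max_right _ _) (by linarith)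
          calc (3 * r) ^ n * (3 * r) ^ γ * I.toReal
              ≤ (3 * r) ^ n * (3 ^ |γ| * (max ‖x‖ r) ^ γ) * I.toReal := by gcongr
            _ = B * (r ^ n * (max ‖x‖ r) ^ γ) := by rw [hB]; ring
            _ ≤ _ := by gcongr; linarith

/-- The power weight `|·|^α` satisfies the Muckenhoupt `A_q` condition. -/
lemma muckenhoupt_norm_rpow (n : ℕ) (hn : 1 ≤ n) (q α : ℝ) (hq : 1 < q)
    (hα1 : -(n : ℝ) < α) (hα2 : α < n * (q - 1)) :
    ∃ K : ℝ, 0 < K ∧ ∀ (x : EuclideanSpace ℝ (Fin n)) (r : ℝ), 0 < r →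
      (∫⁻ y in ball x r, ‖y‖ₑ ^ α) * (∫⁻ y in ball x r, ‖y‖ₑ ^ (-α / (q - 1))) ^ (q - 1) ≤
        ENNReal.ofReal (K * (r ^ n) ^ q) := by
  have hq1 : 0 < q - 1 := by linarith
  obtain ⟨K₁, hK₁, h₁⟩ := lintegral_norm_rpow_ball_le n hn α hα1
  obtain ⟨K₂, hK₂, h₂⟩ := lintegral_norm_rpow_ball_le n hn (-α / (q - 1)) (by
    rw [lt_div_iff₀ hq1]; linarith)
  refine ⟨K₁ * K₂ ^ (q - 1), by positivity, fun x r hr => ?_⟩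
  have hm : 0 < max ‖x‖ r := lt_max_of_lt_right hr
  set m := max ‖x‖ r
  calc _ ≤ ENNReal.ofReal (K₁ * (r ^ n * m ^ α)) *
        ENNReal.ofReal (K₂ * (r ^ n * m ^ (-α / (q - 1)))) ^ (q - 1) := by
        gcongr
        · exact h₁ x r hr
        · exact h₂ x r hr
    _ = _ := by
        rw [ENNReal.ofReal_rpow_of_pos (by positivity), ← ENNReal.ofReal_mul (by positivity)]
        congr 1
        rw [Real.mul_rpow hK₂.le (by positivity), Real.mul_rpow (by positivity) (by positivity),
          ← Real.rpow_mul hm.le, div_mul_cancel₀ _ hq1.ne']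
        have e1 : (r ^ n) ^ q = r ^ n * (r ^ n) ^ (q - 1) := by
          rw [Real.rpow_sub_one (by positivity)]
          field_simp
        have e2 : m ^ α * m ^ (-α) = 1 := by
          rw [← Real.rpow_add hm]; simp
        rw [e1]
        linear_combination (K₁ * K₂ ^ (q - 1) * r ^ n * (r ^ n) ^ (q - 1)) * e2

/-! ### The maximal operator and its weak type bound -/

/-- The centered maximal operator acting on `ℝ≥0∞`-valued functions. -/
def maxE {n : ℕ} (g : EuclideanSpace ℝ (Fin n) → ℝ≥0∞) (x : EuclideanSpace ℝ (Fin n)) : ℝ≥0∞ :=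
  ⨆ r : ℝ, ⨆ _ : 0 < r, (volume (ball x r))⁻¹ * ∫⁻ y in ball x r, g y

lemma lt_maxE_iff {n : ℕ} {g : EuclideanSpace ℝ (Fin n) → ℝ≥0∞} {x : EuclideanSpace ℝ (Fin n)}
    {t : ℝ≥0∞} :
    t < maxE g x ↔ ∃ r : ℝ, 0 < r ∧ t < (volume (ball x r))⁻¹ * ∫⁻ y in ball x r, g y := by
  simp only [maxE, lt_iSup_iff, exists_prop]

/-- The maximal function is lower semicontinuous: a ball on which the average of `g` exceeds `t`
may be shrunk slightly, and then it is contained in all balls of the original radius with a nearby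
centre. -/
lemma measurable_maxE {n : ℕ} (g : EuclideanSpace ℝ (Fin n) → ℝ≥0∞) : Measurable (maxE g) := by
  refine measurable_of_Ioi fun t => IsOpen.measurableSet ?_
  rw [Metric.isOpen_iff]
  intro x hx
  obtain ⟨r, hr, hlt⟩ := lt_maxE_iff.1 hx
  set ν := (volume : Measure (EuclideanSpace ℝ (Fin n))).withDensity g with hν
  have hνb : ∀ z s, ∫⁻ y in ball z s, g y = ν (ball z s) := fun z s =>
    (withDensity_apply _ measurableSet_ball).symm
  have hU : ball x r = ⋃ k : ℕ, ball x (r - 1 / ((k : ℝ) + 1)) := by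
    ext y
    simp only [mem_iUnion, mem_ball]
    constructor
    · intro h
      obtain ⟨k, hk⟩ := exists_nat_one_div_lt (sub_pos.2 h)
      exact ⟨k, by linarith⟩
    · rintro ⟨k, hk⟩
      have : 0 < 1 / ((k : ℝ) + 1) := by positivity
      linarith
  have hmono : Monotone fun k : ℕ => ball x (r - 1 / ((k : ℝ) + 1)) := by
    intro k l hkl
    refine ball_subset_ball ?_
    have : 1 / ((l : ℝ) + 1) ≤ 1 / ((k : ℝ) + 1) := by gcongr
    linarith
  have hsup : ν (ball x r) = ⨆ k : ℕ, ν (ball x (r - 1 / ((k : ℝ) + 1))) := by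
    conv_lhs => rw [hU]
    exact hmono.measure_iUnion
  rw [hνb, hsup, ENNReal.mul_iSup, lt_iSup_iff] at hlt
  obtain ⟨k, hk⟩ := hlt
  refine ⟨1 / ((k : ℝ) + 1), by positivity, fun z hz => ?_⟩
  refine lt_maxE_iff.2 ⟨r, hr, hk.trans_le ?_⟩
  rw [hνb, Measure.addHaar_ball_center volume x, Measure.addHaar_ball_center volume z]
  gcongr
  refine ball_subset_ball' ?_
  rw [mem_ball, dist_comm] at hz
  linarith

/-- Weak type `(q,q)` bound, by the Vitali covering lemma, for any measure that satisfies the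
testing inequality `hkey` on balls. -/
lemma weak_type {n : ℕ} (μ : Measure (EuclideanSpace ℝ (Fin n))) (q : ℝ) (hq : 0 < q) (K : ℝ≥0∞)
    (g : EuclideanSpace ℝ (Fin n) → ℝ≥0∞)
    (hkey : ∀ (x : EuclideanSpace ℝ (Fin n)) (r : ℝ), 0 < r →
      ((volume (ball x r))⁻¹ * ∫⁻ y in ball x r, g y) ^ q * μ (ball x (5 * r)) ≤
        K * ∫⁻ y in ball x r, g y ^ q ∂μ) (t : ℝ≥0∞) :
    t ^ q * μ {x | t < maxE g x} ≤ K * ∫⁻ y, g y ^ q ∂μ := by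
  -- Radii are bounded by `N` so that the covering lemma applies; then `N → ∞`.
  set S : ℕ → Set (EuclideanSpace ℝ (Fin n)) := fun N =>
    {x | ∃ r : ℝ, 0 < r ∧ r ≤ N ∧ t < (volume (ball x r))⁻¹ * ∫⁻ y in ball x r, g y} with hS
  have hSU : {x | t < maxE g x} = ⋃ N, S N := by
    ext x
    simp only [mem_ofPred_eq, mem_iUnion, hS, lt_maxE_iff]
    constructor
    · rintro ⟨r, hr, h⟩
      obtain ⟨N, hN⟩ := exists_nat_ge r
      exact ⟨N, r, hr, hN, h⟩
    · rintro ⟨N, r, hr, -, h⟩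
      exact ⟨r, hr, h⟩
  have hSmono : Monotone S := by
    rintro N N' hNN' x ⟨r, hr, hrN, h⟩
    exact ⟨r, hr, hrN.trans (by exact_mod_cast hNN'), h⟩
  rw [hSU, hSmono.measure_iUnion, ENNReal.mul_iSup]
  refine iSup_le fun N => ?_
  have hex : ∀ x : EuclideanSpace ℝ (Fin n), ∃ r : ℝ, x ∈ S N →
      (0 < r ∧ r ≤ N ∧ t < (volume (ball x r))⁻¹ * ∫⁻ y in ball x r, g y) := by
    intro x
    by_cases hx : x ∈ S N
    · obtain ⟨r, h⟩ := hx
      exact ⟨r, fun _ => h⟩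
    · exact ⟨0, fun h => absurd h hx⟩
  choose r hr using hex
  obtain ⟨u, huS, hdisj, hcov⟩ := Vitali.exists_disjoint_subfamily_covering_enlargement_ball
    (S N) (fun x => x) r N (fun x hx => (hr x hx).2.1) 5 (by norm_num)
  have hcount : u.Countable := hdisj.countable_of_isOpen (fun _ _ => isOpen_ball)
    (fun x hx => nonempty_ball.2 (hr x (huS hx)).1)
  have hsub : S N ⊆ ⋃ b ∈ u, ball b (5 * r b) := by
    intro x hx
    obtain ⟨b, hb, hsub⟩ := hcov x hx
    exact mem_iUnion₂.2 ⟨b, hb, hsub (mem_ball_self (hr x hx).1)⟩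
  calc t ^ q * μ (S N) ≤ t ^ q * ∑' b : u, μ (ball (b : EuclideanSpace ℝ (Fin n)) (5 * r b)) := by
        gcongr
        exact (measure_mono hsub).trans (measure_biUnion_le μ hcount _)
    _ = ∑' b : u, t ^ q * μ (ball (b : EuclideanSpace ℝ (Fin n)) (5 * r b)) :=
        ENNReal.tsum_mul_left.symm
    _ ≤ ∑' b : u, K * ∫⁻ y in ball (b : EuclideanSpace ℝ (Fin n)) (r b), g y ^ q ∂μ := by
        refine ENNReal.tsum_le_tsum fun b => ?_
        obtain ⟨hb, -, hlt⟩ := hr b (huS b.2)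
        refine le_trans ?_ (hkey b (r b) hb)
        gcongr
    _ = K * ∫⁻ y in ⋃ b ∈ u, ball b (r b), g y ^ q ∂μ := by
        rw [ENNReal.tsum_mul_left, lintegral_biUnion hcount (fun _ _ => measurableSet_ball) hdisj]
    _ ≤ K * ∫⁻ y, g y ^ q ∂μ := by
        gcongr
        exact Measure.restrict_le_self

/-! ### Interpolation -/

/-- The layer-cake integrand: `∫_0^a t^(s-1) dt = a^s / s`, also for `a = ∞`. -/
lemma lintegral_Ioi_rpow_lt (s : ℝ) (hs : 0 < s) (a : ℝ≥0∞) :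
    ∫⁻ t in Ioi (0 : ℝ), {t : ℝ | ENNReal.ofReal t < a}.indicator
      (fun t => ENNReal.ofReal (t ^ (s - 1))) t = ENNReal.ofReal (1 / s) * a ^ s := by
  have hfin : ∀ b : ℝ, 0 ≤ b → ∫⁻ t in Ioi (0 : ℝ), {t : ℝ | ENNReal.ofReal t <
      ENNReal.ofReal b}.indicator (fun t => ENNReal.ofReal (t ^ (s - 1))) t =
      ENNReal.ofReal (1 / s) * ENNReal.ofReal b ^ s := by
    intro b hb
    have hset : ∀ t ∈ Ioi (0 : ℝ), {t : ℝ | ENNReal.ofReal t < ENNReal.ofReal b}.indicator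
        (fun t => ENNReal.ofReal (t ^ (s - 1))) t =
        (Iio b).indicator (fun t => ENNReal.ofReal (t ^ (s - 1))) t := by
      intro t ht
      have h0 : (0 : ℝ) ≤ t := le_of_lt ht
      simp only [indicator, mem_ofPred_eq, mem_Iio, ENNReal.ofReal_lt_ofReal_iff_of_nonneg h0]
    rw [setLIntegral_congr_fun measurableSet_Ioi hset, lintegral_indicator measurableSet_Iio,
      Measure.restrict_restrict measurableSet_Iio, inter_comm, Ioi_inter_Iio,
      restrict_Ioo_eq_restrict_Ioc]
    have hint : IntervalIntegrable (fun t : ℝ => t ^ (s - 1)) volume 0 b :=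
      intervalIntegral.intervalIntegrable_rpow' (by linarith)
    rw [intervalIntegrable_iff_integrableOn_Ioc_of_le hb] at hint
    rw [← ofReal_integral_eq_lintegral_ofReal hint
      ((ae_restrict_iff' measurableSet_Ioc).2 (.of_forall fun t ht => Real.rpow_nonneg ht.1.le _)),
      ← intervalIntegral.integral_of_le hb, integral_rpow (Or.inl (by linarith)),
      sub_add_cancel, Real.zero_rpow hs.ne', sub_zero, ENNReal.ofReal_rpow_of_nonneg hb hs.le,
      ← ENNReal.ofReal_mul (by positivity)]
    congr 1
    ring
  rcases eq_or_ne a ∞ with rfl | ha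
  · rw [ENNReal.top_rpow_of_pos hs, ENNReal.mul_top (by simpa using hs)]
    refine ENNReal.eq_top_of_forall_nnreal_le fun c => ?_
    -- Integrating up to `b = (s c)^(1/s)` already gives `c`.
    have hb := hfin ((s * c) ^ (1 / s)) (by positivity)
    rw [ENNReal.ofReal_rpow_of_nonneg (by positivity) hs.le, ← Real.rpow_mul (by positivity),
      one_div_mul_cancel hs.ne', Real.rpow_one, ← ENNReal.ofReal_mul (by positivity),
      ← mul_assoc, one_div_mul_cancel hs.ne', one_mul, ENNReal.ofReal_coe_nnreal] at hb
    rw [← hb]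
    refine lintegral_mono fun t => indicator_le_indicator_of_subset ?_ (fun _ => zero_le) t
    exact fun t _ => ENNReal.ofReal_lt_top
  · have := hfin a.toReal ENNReal.toReal_nonneg
    rwa [ENNReal.ofReal_toReal ha] at this

/-- Truncation: the part of `g` below `c` contributes at most `c` to the maximal function. -/
lemma maxE_le_add {n : ℕ} {g g₁ : EuclideanSpace ℝ (Fin n) → ℝ≥0∞} (hg₁ : Measurable g₁) {c : ℝ≥0∞}
    (h : ∀ y, g y ≤ g₁ y + c) (x : EuclideanSpace ℝ (Fin n)) : maxE g x ≤ maxE g₁ x + c := by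
  refine iSup₂_le fun r hr => ?_
  calc (volume (ball x r))⁻¹ * ∫⁻ y in ball x r, g y
      ≤ (volume (ball x r))⁻¹ * ∫⁻ y in ball x r, (g₁ y + c) := by
        gcongr with y
        exact h y
    _ = (volume (ball x r))⁻¹ * (∫⁻ y in ball x r, g₁ y) + c := by
        rw [lintegral_add_left hg₁, setLIntegral_const, mul_add, mul_left_comm,
          ENNReal.inv_mul_cancel (measure_ball_pos _ _ hr).ne' measure_ball_lt_top.ne, mul_one]
    _ ≤ maxE g₁ x + c := by
        gcongr
        exact le_iSup₂_of_le (f := fun (r : ℝ) (_ : 0 < r) =>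
          (volume (ball x r))⁻¹ * ∫⁻ y in ball x r, g₁ y) r hr le_rfl

/-- Marcinkiewicz interpolation between weak type `(q,q)` and the trivial `L^∞` bound. -/
lemma strong_type {n : ℕ} (μ : Measure (EuclideanSpace ℝ (Fin n))) [SFinite μ] (q p : ℝ)
    (hq : 0 < q) (hqp : q < p) (K : ℝ≥0∞)
    (hweak : ∀ g : EuclideanSpace ℝ (Fin n) → ℝ≥0∞, Measurable g → ∀ t : ℝ≥0∞,
      t ^ q * μ {x | t < maxE g x} ≤ K * ∫⁻ y, g y ^ q ∂μ)
    (g : EuclideanSpace ℝ (Fin n) → ℝ≥0∞) (hg : Measurable g) :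
    ∫⁻ x, maxE g x ^ p ∂μ ≤
      ENNReal.ofReal p * (2 ^ q * K * (ENNReal.ofReal (1 / (p - q)) * 2 ^ (p - q))) *
        ∫⁻ x, g x ^ p ∂μ := by
  have hp : 0 < p := hq.trans hqp
  have hpq : 0 < p - q := by linarith
  have hF := measurable_maxE g
  -- The distribution of `maxE g` at height `t` is controlled by the part of `g` above `t / 2`.
  have hdist : ∀ t ∈ Ioi (0 : ℝ), ENNReal.ofReal (t ^ (p - 1)) * μ {x | ENNReal.ofReal t < maxE g x}
      ≤ 2 ^ q * K * ∫⁻ y, {t : ℝ | ENNReal.ofReal t < 2 * g y}.indicator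
        (fun t => ENNReal.ofReal (t ^ (p - q - 1))) t * g y ^ q ∂μ := by
    intro t ht
    have ht0 : (0 : ℝ) < t := ht
    set A : Set (EuclideanSpace ℝ (Fin n)) := {y | ENNReal.ofReal t < 2 * g y} with hA
    have hAm : MeasurableSet A := measurableSet_lt measurable_const (hg.const_mul 2)
    have hg₁ : Measurable (A.indicator g) := hg.indicator hAm
    have hhalf : ENNReal.ofReal (t / 2) + ENNReal.ofReal (t / 2) = ENNReal.ofReal t := by
      rw [← ENNReal.ofReal_add (by positivity) (by positivity), add_halves]
    have hle : ∀ y, g y ≤ A.indicator g y + ENNReal.ofReal (t / 2) := by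
      intro y
      by_cases hy : y ∈ A
      · rw [indicator_of_mem hy]
        exact le_self_add
      · rw [indicator_of_notMem hy, zero_add]
        have h1 : 2 * g y ≤ ENNReal.ofReal t := not_lt.1 hy
        have h2 : ENNReal.ofReal t = 2 * ENNReal.ofReal (t / 2) := by rw [← hhalf, two_mul]
        rw [h2] at h1
        exact (ENNReal.mul_le_mul_iff_right (by norm_num) (by norm_num)).1 h1
    have hsub : {x | ENNReal.ofReal t < maxE g x} ⊆
        {x | ENNReal.ofReal (t / 2) < maxE (A.indicator g) x} := by
      intro x hx
      by_contra hcon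
      have h1 : maxE (A.indicator g) x ≤ ENNReal.ofReal (t / 2) := not_lt.1 hcon
      have h2 := maxE_le_add hg₁ hle x
      have h3 : maxE g x ≤ ENNReal.ofReal t := by
        rw [← hhalf]
        exact h2.trans (by gcongr)
      exact absurd hx (not_lt.2 h3)
    have hw := hweak _ hg₁ (ENNReal.ofReal (t / 2))
    have hpow : ENNReal.ofReal (t ^ (p - 1)) =
        ENNReal.ofReal (t ^ (p - q - 1)) * (2 ^ q * ENNReal.ofReal (t / 2) ^ q) := by
      have h2 : (2 : ℝ≥0∞) ^ q = ENNReal.ofReal (2 ^ q) := by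
        rw [← ENNReal.ofReal_rpow_of_pos two_pos]; simp
      rw [h2, ENNReal.ofReal_rpow_of_pos (by positivity), ← ENNReal.ofReal_mul (by positivity),
        ← ENNReal.ofReal_mul (by positivity), ← Real.mul_rpow (by positivity) (by positivity),
        mul_div_cancel₀ _ two_ne_zero, ← Real.rpow_add ht0]
      congr 2
      ring
    have hind : ∀ y, A.indicator g y ^ q = A.indicator (fun y => g y ^ q) y := by
      intro y
      by_cases hy : y ∈ A <;> simp [hy, hq]
    calc ENNReal.ofReal (t ^ (p - 1)) * μ {x | ENNReal.ofReal t < maxE g x}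
        ≤ ENNReal.ofReal (t ^ (p - 1)) *
            μ {x | ENNReal.ofReal (t / 2) < maxE (A.indicator g) x} := by gcongr
      _ = ENNReal.ofReal (t ^ (p - q - 1)) * 2 ^ q * (ENNReal.ofReal (t / 2) ^ q *
            μ {x | ENNReal.ofReal (t / 2) < maxE (A.indicator g) x}) := by
          rw [hpow]; ring
      _ ≤ ENNReal.ofReal (t ^ (p - q - 1)) * 2 ^ q *
            (K * ∫⁻ y, A.indicator g y ^ q ∂μ) := by gcongr
      _ = 2 ^ q * K * (ENNReal.ofReal (t ^ (p - q - 1)) *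
            ∫⁻ y, A.indicator g y ^ q ∂μ) := by ring
      _ = _ := by
          rw [← lintegral_const_mul _ (hg₁.pow_const q)]
          congr 1
          refine lintegral_congr fun y => ?_
          rw [hind]
          by_cases hy : ENNReal.ofReal t < 2 * g y
          · have h1 : y ∈ A := hy
            have h2 : t ∈ {t : ℝ | ENNReal.ofReal t < 2 * g y} := hy
            rw [indicator_of_mem h1, indicator_of_mem h2]
          · have h1 : y ∉ A := hy
            have h2 : t ∉ {t : ℝ | ENNReal.ofReal t < 2 * g y} := hy
            rw [indicator_of_notMem h1, indicator_of_notMem h2, mul_zero, zero_mul]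
  have hjoint : ∀ (G : EuclideanSpace ℝ (Fin n) → ℝ≥0∞) (s : ℝ), Measurable G →
      Measurable fun z : EuclideanSpace ℝ (Fin n) × ℝ => {t : ℝ | ENNReal.ofReal t < G z.1}.indicator
        (fun t => ENNReal.ofReal (t ^ s)) z.2 := by
    intro G s hG
    have hset : MeasurableSet {z : EuclideanSpace ℝ (Fin n) × ℝ | ENNReal.ofReal z.2 < G z.1} :=
      measurableSet_lt (by fun_prop) (by fun_prop)
    exact Measurable.indicator (f := fun z : EuclideanSpace ℝ (Fin n) × ℝ =>
      ENNReal.ofReal (z.2 ^ s)) (by fun_prop) hset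
  calc ∫⁻ x, maxE g x ^ p ∂μ
      = ENNReal.ofReal p * ∫⁻ x, (∫⁻ t in Ioi (0 : ℝ), {t : ℝ | ENNReal.ofReal t <
          maxE g x}.indicator (fun t => ENNReal.ofReal (t ^ (p - 1))) t) ∂μ := by
        simp_rw [lintegral_Ioi_rpow_lt p hp]
        rw [lintegral_const_mul _ (hF.pow_const p), ← mul_assoc, ← ENNReal.ofReal_mul hp.le,
          mul_one_div_cancel hp.ne', ENNReal.ofReal_one, one_mul]
    _ = ENNReal.ofReal p * ∫⁻ t in Ioi (0 : ℝ), ∫⁻ x, {t : ℝ | ENNReal.ofReal t <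
          maxE g x}.indicator (fun t => ENNReal.ofReal (t ^ (p - 1))) t ∂μ := by
        rw [lintegral_lintegral_swap (hjoint _ _ hF).aemeasurable]
    _ = ENNReal.ofReal p * ∫⁻ t in Ioi (0 : ℝ),
          ENNReal.ofReal (t ^ (p - 1)) * μ {x | ENNReal.ofReal t < maxE g x} := by
        congr 1
        refine lintegral_congr fun t => ?_
        rw [← lintegral_indicator_const (measurableSet_lt measurable_const hF)]
        rfl
    _ ≤ ENNReal.ofReal p * ∫⁻ t in Ioi (0 : ℝ), 2 ^ q * K * ∫⁻ y, {t : ℝ | ENNReal.ofReal t <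
          2 * g y}.indicator (fun t => ENNReal.ofReal (t ^ (p - q - 1))) t * g y ^ q ∂μ := by
        gcongr ENNReal.ofReal p * ?_
        exact setLIntegral_mono' measurableSet_Ioi hdist
    _ = ENNReal.ofReal p * (2 ^ q * K * ∫⁻ y, (∫⁻ t in Ioi (0 : ℝ), {t : ℝ | ENNReal.ofReal t <
          2 * g y}.indicator (fun t => ENNReal.ofReal (t ^ (p - q - 1))) t * g y ^ q) ∂μ) := by
        have hm : Measurable (Function.uncurry fun (y : EuclideanSpace ℝ (Fin n)) (t : ℝ) =>
            {t : ℝ | ENNReal.ofReal t < 2 * g y}.indicator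
              (fun t => ENNReal.ofReal (t ^ (p - q - 1))) t * g y ^ q) :=
          (hjoint (fun y => 2 * g y) (p - q - 1) (hg.const_mul 2)).mul
            ((hg.comp measurable_fst).pow_const q)
        have hm' : Measurable fun t : ℝ => ∫⁻ y, {t : ℝ | ENNReal.ofReal t < 2 * g y}.indicator
            (fun t => ENNReal.ofReal (t ^ (p - q - 1))) t * g y ^ q ∂μ := hm.lintegral_prod_left'
        rw [lintegral_const_mul _ hm', lintegral_lintegral_swap hm.aemeasurable]
    _ = ENNReal.ofReal p * (2 ^ q * K * ∫⁻ y, ENNReal.ofReal (1 / (p - q)) * 2 ^ (p - q) *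
          g y ^ p ∂μ) := by
        congr 2
        refine lintegral_congr fun y => ?_
        have hm : Measurable fun t : ℝ => {t : ℝ | ENNReal.ofReal t < 2 * g y}.indicator
            (fun t => ENNReal.ofReal (t ^ (p - q - 1))) t :=
          (hjoint (fun y => 2 * g y) (p - q - 1) (hg.const_mul 2)).comp measurable_prodMk_left
        rw [lintegral_mul_const _ hm, lintegral_Ioi_rpow_lt (p - q) hpq, ENNReal.mul_rpow_of_nonneg _ _ hpq.le]
        have : g y ^ p = g y ^ (p - q) * g y ^ q := by
          rw [← ENNReal.rpow_add_of_nonneg _ _ hpq.le hq.le, sub_add_cancel]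
        rw [this]
        ring
    _ = _ := by
        rw [lintegral_const_mul _ (hg.pow_const p)]
        ring

/-! ### The weighted bound -/

/-- The testing inequality for the power weight: Hölder's inequality on `B(x,r)` combined with the
`A_q` condition on the enlarged ball `B(x,5r)`. -/
lemma key_ineq (n : ℕ) (hn : 1 ≤ n) (q α : ℝ) (hq : 1 < q)
    (hα1 : -(n : ℝ) < α) (hα2 : α < n * (q - 1)) :
    ∃ K : ℝ, 0 < K ∧ ∀ g : EuclideanSpace ℝ (Fin n) → ℝ≥0∞, Measurable g →
      ∀ (x : EuclideanSpace ℝ (Fin n)) (r : ℝ), 0 < r →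
      ((volume (ball x r))⁻¹ * ∫⁻ y in ball x r, g y) ^ q *
          volume.withDensity (fun y => ‖y‖ₑ ^ α) (ball x (5 * r)) ≤
        ENNReal.ofReal K *
          ∫⁻ y in ball x r, g y ^ q ∂(volume.withDensity (fun y => ‖y‖ₑ ^ α)) := by
  have : Nonempty (Fin n) := ⟨⟨0, hn⟩⟩
  have hq1 : 0 < q - 1 := by linarith
  have hq0 : 0 < q := by linarith
  obtain ⟨K, hK, hA⟩ := muckenhoupt_norm_rpow n hn q α hq hα1 hα2
  set v := volume (ball (0 : EuclideanSpace ℝ (Fin n)) 1) with hv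
  have hvt : v ≠ ∞ := measure_ball_lt_top.ne
  have hv0 : v ≠ 0 := (measure_ball_pos _ _ one_pos).ne'
  have hvr : 0 < v.toReal := ENNReal.toReal_pos hv0 hvt
  have hvv : v = ENNReal.ofReal v.toReal := (ENNReal.ofReal_toReal hvt).symm
  refine ⟨K * ((5 ^ n) ^ q * (v.toReal⁻¹) ^ q), by positivity, fun g hg x r hr => ?_⟩
  have hwm : Measurable fun y : EuclideanSpace ℝ (Fin n) => ‖y‖ₑ ^ α := by fun_prop
  have hWeq : ∫⁻ y in ball x r, g y ^ q ∂(volume.withDensity (fun y => ‖y‖ₑ ^ α)) =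
      ∫⁻ y in ball x r, ‖y‖ₑ ^ α * g y ^ q := by
    rw [restrict_withDensity measurableSet_ball,
      lintegral_withDensity_eq_lintegral_mul _ hwm (hg.pow_const q)]
    rfl
  rw [hWeq, withDensity_apply _ measurableSet_ball]
  set J := ∫⁻ y in ball x r, g y
  set G := ∫⁻ y in ball x r, ‖y‖ₑ ^ α * g y ^ q with hG
  set S := ∫⁻ y in ball x r, ‖y‖ₑ ^ (-α / (q - 1)) with hS
  have hconj := Real.HolderConjugate.conjExponent hq
  have hne : ∀ᵐ y : EuclideanSpace ℝ (Fin n) ∂(volume.restrict (ball x r)), y ≠ 0 :=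
    ae_restrict_of_ae (by simp [ae_iff])
  have hholder : J ^ q ≤ G * S ^ (q - 1) := by
    have h1 := ENNReal.lintegral_mul_le_Lp_mul_Lq (volume.restrict (ball x r)) hconj
      (f := fun y => g y * ‖y‖ₑ ^ (α / q)) (g := fun y => ‖y‖ₑ ^ (-α / q))
      (by fun_prop) (by fun_prop)
    have e1 : ∫⁻ y in ball x r,
        ((fun y => g y * ‖y‖ₑ ^ (α / q)) * (fun y => ‖y‖ₑ ^ (-α / q)) :
          EuclideanSpace ℝ (Fin n) → ℝ≥0∞) y = J := by
      refine lintegral_congr_ae ?_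
      filter_upwards [hne] with y hy
      have hy0 : ‖y‖ₑ ≠ 0 := by simpa using hy
      rw [Pi.mul_apply, mul_assoc, ← ENNReal.rpow_add _ _ hy0 (by simp), neg_div, add_neg_cancel,
        ENNReal.rpow_zero, mul_one]
    have e2 : ∫⁻ y in ball x r, (g y * ‖y‖ₑ ^ (α / q)) ^ q = G := by
      refine lintegral_congr fun y => ?_
      rw [ENNReal.mul_rpow_of_nonneg _ _ hq0.le, ← ENNReal.rpow_mul, div_mul_cancel₀ _ hq0.ne',
        mul_comm]
    have e3 : ∫⁻ y in ball x r, (‖y‖ₑ ^ (-α / q)) ^ (q.conjExponent) = S := by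
      refine lintegral_congr fun y => ?_
      rw [← ENNReal.rpow_mul, Real.conjExponent]
      congr 1
      field_simp
    rw [e1, e2, e3] at h1
    calc J ^ q ≤ (G ^ (1 / q) * S ^ (1 / q.conjExponent)) ^ q := by gcongr
      _ = G * S ^ (q - 1) := by
        rw [ENNReal.mul_rpow_of_nonneg _ _ hq0.le, ← ENNReal.rpow_mul, ← ENNReal.rpow_mul,
          one_div_mul_cancel hq0.ne', ENNReal.rpow_one, Real.conjExponent]
        congr 2
        field_simp
  have hV : (volume (ball x r))⁻¹ ^ q = ENNReal.ofReal (((r ^ n * v.toReal)⁻¹) ^ q) := by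
    rw [Measure.addHaar_ball _ _ hr.le, ← hv, finrank_euclideanSpace, Fintype.card_fin]
    nth_rewrite 1 [hvv]
    rw [← ENNReal.ofReal_mul (by positivity), ← ENNReal.ofReal_inv_of_pos (by positivity),
      ENNReal.ofReal_rpow_of_pos (by positivity)]
  have hSle : S ≤ ∫⁻ y in ball x (5 * r), ‖y‖ₑ ^ (-α / (q - 1)) :=
    lintegral_mono_set (ball_subset_ball (by linarith))
  have hA5 := hA x (5 * r) (by positivity)
  set W := ∫⁻ y in ball x (5 * r), ‖y‖ₑ ^ α
  calc ((volume (ball x r))⁻¹ * J) ^ q * W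
      = (volume (ball x r))⁻¹ ^ q * (J ^ q * W) := by
        rw [ENNReal.mul_rpow_of_nonneg _ _ hq0.le, mul_assoc]
    _ ≤ (volume (ball x r))⁻¹ ^ q * (G * S ^ (q - 1) * W) := by gcongr
    _ = (volume (ball x r))⁻¹ ^ q * (W * S ^ (q - 1)) * G := by ring
    _ ≤ (volume (ball x r))⁻¹ ^ q * ENNReal.ofReal (K * ((5 * r) ^ n) ^ q) * G := by
        gcongr
        refine le_trans ?_ hA5
        gcongr
    _ = _ := by
        rw [hV, ← ENNReal.ofReal_mul (by positivity)]
        congr 2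
        rw [mul_inv, mul_pow, Real.mul_rpow (by positivity) (by positivity),
          Real.mul_rpow (by positivity) (by positivity), Real.inv_rpow (x := r ^ n) (by positivity)]
        have : (r ^ n) ^ q ≠ 0 := by positivity
        field_simp

end

/-- Boundedness of the Hardy–Littlewood maximal operator on `L^p(ℝ^n, |·|^α)`
for `1 < p < ∞` and `-n < α < n(p-1)`. -/
theorem maximal_bounded_weighted_Lp
    (n : ℕ) (hn : 1 ≤ n) (p α : ℝ) (hp : 1 < p)
    (hα1 : -(n : ℝ) < α) (hα2 : α < n * (p - 1)) :
    ∃ C : ℝ, 0 < C ∧ ∀ f : EuclideanSpace ℝ (Fin n) → ℝ, LocallyIntegrable f volume →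
      wLpE n p α (maximalFn n f) ≤ ENNReal.ofReal C * wLp n p α f := by
  have hn0 : (0 : ℝ) < n := by exact_mod_cast hn
  have hp0 : 0 < p := by linarith
  -- The `A_p` range is open: the weight is already `A_q` for some `q < p`.
  obtain ⟨q, hql, hqp⟩ : ∃ q, max 1 (α / n + 1) < q ∧ q < p := by
    refine exists_between (max_lt hp ?_)
    have : α / n < p - 1 := by rw [div_lt_iff₀ hn0]; linarith
    linarith
  have hq : 1 < q := (le_max_left _ _).trans_lt hql
  have hαq : α < n * (q - 1) := by
    have h1 : α / n + 1 < q := (le_max_right _ _).trans_lt hql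
    have h2 : α / n < q - 1 := by linarith
    rw [div_lt_iff₀ hn0] at h2
    linarith
  have hq0 : 0 < q := by linarith
  have hpq : 0 < p - q := by linarith
  obtain ⟨K, hK, hkey⟩ := key_ineq n hn q α hq hα1 hαq
  have hwm : Measurable fun y : EuclideanSpace ℝ (Fin n) => ‖y‖ₑ ^ α := by fun_prop
  set μ := (volume : Measure (EuclideanSpace ℝ (Fin n))).withDensity (fun y => ‖y‖ₑ ^ α) with hμ
  have hstrong := strong_type μ q p hq0 hqp (ENNReal.ofReal K)
    (fun g hg t => weak_type μ q hq0 _ g (hkey g hg) t)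
  set D : ℝ≥0∞ := ENNReal.ofReal p *
    (2 ^ q * ENNReal.ofReal K * (ENNReal.ofReal (1 / (p - q)) * 2 ^ (p - q))) with hD
  have hDt : D ≠ ∞ := by
    rw [hD]
    finiteness
  have hint : ∀ F : EuclideanSpace ℝ (Fin n) → ℝ≥0∞, Measurable F →
      ∫⁻ x, F x ^ p * (‖x‖₊ : ℝ≥0∞) ^ α = ∫⁻ x, F x ^ p ∂μ := by
    intro F hF
    rw [hμ, lintegral_withDensity_eq_lintegral_mul _ hwm (hF.pow_const p)]
    exact lintegral_congr fun x => mul_comm _ _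
  refine ⟨(D ^ (1 / p)).toReal + 1, by positivity, fun f hf => ?_⟩
  have hfm : AEMeasurable (fun x => (‖f x‖₊ : ℝ≥0∞)) volume :=
    hf.aestronglyMeasurable.enorm
  set g := hfm.mk _ with hg
  have hgm : Measurable g := hfm.measurable_mk
  have hfg : (fun x => (‖f x‖₊ : ℝ≥0∞)) =ᵐ[volume] g := hfm.ae_eq_mk
  have hmax : maximalFn n f = maxE g := by
    funext x
    unfold maximalFn maxE
    refine iSup_congr fun r => iSup_congr fun _ => ?_
    rw [lintegral_congr_ae (ae_restrict_of_ae hfg)]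
  have hnorm : wLp n p α f = (∫⁻ x, g x ^ p ∂μ) ^ (1 / p) := by
    rw [wLp, wLpE, ← hint g hgm]
    congr 1
    refine lintegral_congr_ae ?_
    filter_upwards [hfg] with x hx
    rw [hx]
  rw [hmax, hnorm, wLpE, hint _ (measurable_maxE g)]
  calc (∫⁻ x, maxE g x ^ p ∂μ) ^ (1 / p) ≤ (D * ∫⁻ x, g x ^ p ∂μ) ^ (1 / p) := by
        gcongr
        exact hstrong g hgm
    _ = D ^ (1 / p) * (∫⁻ x, g x ^ p ∂μ) ^ (1 / p) :=
        ENNReal.mul_rpow_of_nonneg _ _ (by positivity)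
    _ ≤ _ := by
        gcongr
        have hDp : D ^ (1 / p) ≠ ∞ := ENNReal.rpow_ne_top_of_nonneg (by positivity) hDt
        rw [← ENNReal.ofReal_toReal hDp]
        refine ENNReal.ofReal_le_ofReal ?_
        rw [ENNReal.ofReal_toReal hDp]
        linarith
end
end

section
/- Let n ≥ 1, 1 < p < ∞, 1 < q < ∞ and −n < α < n(p−1). Then there exists a constant C > 0 such that for every sequence (f_j)_{j≥0} of locally integrable functions on ℝ^n, ‖(Σ_{j=0}^∞ (Mf_j)^q)^{1/q}‖_{L^p(|·|^α)} ≤ C ‖(Σ_{j=0}^∞ |f_j|^q)^{1/q}‖_{L^p(|·|^α)}, where M denotes the centered Hardy–Littlewood maximal operator. -/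
/-!
Call a weight `u` an `A₁` weight if `Mu ≤ K u` almost everywhere. All functions are taken with
values in `ℝ≥0∞`, so that no integrability has to be tracked.

*Scalar theory.* A Vitali covering gives the weak type `(1,1)` inequality for `M` with respect to
an `A₁` weight (`weak_type`), and the layer cake formula turns it into boundedness of `M` on `L^r(u)`
for every `r > 1`, with a constant depending only on `n`, `r` and `K` (`strong_type`). For two `A₁`
weights `u`, `v` and `0 < θ < q - 1`, Hölder's inequality on balls yields the pointwise estimate
`(Mg)^q ≤ (M(g^(q/(q-θ)) v^(-θ/(q-θ))))^(q-θ) (Mv)^θ`, and the `A₁` theorem at the exponent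
`q - θ > 1` shows that `M` is bounded on `L^q(u v^(-θ))` (`factored_type`). The powers `|x|^β` with
`-n < β ≤ 0` are `A₁` (`powW_A1`), so `M` is bounded on `L^q(|x|^α)` for `-n < α < n(q-1)`
(`powW_type`).

*Extrapolation from `q` to `p`.* In `L^q(w)` the vector-valued inequality follows from the scalar
one by summing over `j`. To reach the exponent `p`, put `G = (∑ |f_j|^q)^(1/q)` and
`F = (∑ (M f_j)^q)^(1/q)`, and test `F` against `h |x|^α` with `h` in the dual space. As `α < n(p-1)`,
there is `1 < s < p` with `α < n(s-1)`. The Rubio de Francia algorithm (`rubio_de_francia`) in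
`L^s(|x|^α)` gives an `A₁` majorant `v` of `G^(p/s)`, and in `L^{p'}(|x|^{-α/(p-1)})`, `p' = p/(p-1)`,
an `A₁` majorant `u` of `h |x|^α`. With `θ = (q-1)s/p < q-1` the weight `u v^(-θ)` is covered by
`factored_type`, and two applications of Hölder's inequality give
`∫ F u ≤ C ∫ u v^(s/p) ≤ C ‖G‖ ‖h‖` (`extrapolation`). Duality is then made explicit by choosing
`h = H^(p-1)` for bounded truncations `H` of `F` with compact support
(`fefferman_stein_measurable`).
-/

open MeasureTheory ENNReal

noncomputable section

open scoped NNReal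

/-! ### The maximal operator on `ℝ≥0∞`-valued functions -/

/-- The centered maximal operator acting on `ℝ≥0∞`-valued functions;
`maximalFn n f` is `hlMax` of the norm of `f`. -/
def hlMax {n : ℕ} (g : EuclideanSpace ℝ (Fin n) → ℝ≥0∞) (x : EuclideanSpace ℝ (Fin n)) : ℝ≥0∞ :=
  ⨆ r : ℝ, ⨆ _ : 0 < r, (volume (Metric.ball x r))⁻¹ * ∫⁻ y in Metric.ball x r, g y

lemma maximalFn_eq_hlMax {n : ℕ} (f : EuclideanSpace ℝ (Fin n) → ℝ) :
    maximalFn n f = hlMax (fun y => (‖f y‖₊ : ℝ≥0∞)) := rfl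

lemma volume_ball_pos {n : ℕ} (x : EuclideanSpace ℝ (Fin n)) {r : ℝ} (hr : 0 < r) :
    volume (Metric.ball x r) ≠ 0 := (Metric.measure_ball_pos volume x hr).ne'

lemma volume_ball_lt_top {n : ℕ} (x : EuclideanSpace ℝ (Fin n)) {r : ℝ} :
    volume (Metric.ball x r) ≠ ⊤ := measure_ball_lt_top.ne

lemma lintegral_ball_le {n : ℕ} (g : EuclideanSpace ℝ (Fin n) → ℝ≥0∞)
    (x : EuclideanSpace ℝ (Fin n)) {r : ℝ} (hr : 0 < r) :
    ∫⁻ y in Metric.ball x r, g y ≤ volume (Metric.ball x r) * hlMax g x := by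
  have h : (volume (Metric.ball x r))⁻¹ * ∫⁻ y in Metric.ball x r, g y ≤ hlMax g x :=
    le_iSup₂ (f := fun (r : ℝ) (_ : 0 < r) =>
      (volume (Metric.ball x r))⁻¹ * ∫⁻ y in Metric.ball x r, g y) r hr
  calc ∫⁻ y in Metric.ball x r, g y
      = volume (Metric.ball x r) *
          ((volume (Metric.ball x r))⁻¹ * ∫⁻ y in Metric.ball x r, g y) := by
        rw [← mul_assoc, ENNReal.mul_inv_cancel (volume_ball_pos x hr) (volume_ball_lt_top x),
          one_mul]
    _ ≤ _ := by gcongr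

lemma hlMax_le {n : ℕ} {g : EuclideanSpace ℝ (Fin n) → ℝ≥0∞}
    {x : EuclideanSpace ℝ (Fin n)} {a : ℝ≥0∞}
    (h : ∀ r : ℝ, 0 < r → ∫⁻ y in Metric.ball x r, g y ≤ volume (Metric.ball x r) * a) :
    hlMax g x ≤ a := by
  refine iSup₂_le fun r hr => ?_
  calc (volume (Metric.ball x r))⁻¹ * ∫⁻ y in Metric.ball x r, g y
      ≤ (volume (Metric.ball x r))⁻¹ * (volume (Metric.ball x r) * a) := by
        gcongr; exact h r hr
    _ = a := by
        rw [← mul_assoc, ENNReal.inv_mul_cancel (volume_ball_pos x hr) (volume_ball_lt_top x),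
          one_mul]

lemma hlMax_mono_ae {n : ℕ} {g h : EuclideanSpace ℝ (Fin n) → ℝ≥0∞}
    (hgh : ∀ᵐ x, g x ≤ h x) (x : EuclideanSpace ℝ (Fin n)) : hlMax g x ≤ hlMax h x :=
  hlMax_le fun _ hr =>
    (lintegral_mono_ae (ae_restrict_of_ae hgh)).trans (lintegral_ball_le h x hr)

lemma hlMax_congr_ae {n : ℕ} {g h : EuclideanSpace ℝ (Fin n) → ℝ≥0∞}
    (hgh : g =ᵐ[volume] h) : hlMax g = hlMax h :=
  funext fun x => le_antisymm (hlMax_mono_ae (hgh.mono fun _ h => h.le) x)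
    (hlMax_mono_ae (hgh.mono fun _ h => h.ge) x)

/-- If the maximal function vanishes at a single point, the function is null. -/
lemma ae_zero_of_hlMax_eq_zero {n : ℕ} {g : EuclideanSpace ℝ (Fin n) → ℝ≥0∞}
    (hg : Measurable g) {x : EuclideanSpace ℝ (Fin n)} (hx : hlMax g x = 0) :
    g =ᵐ[volume] 0 := by
  have h : ∀ k : ℕ, ∀ᵐ y ∂volume.restrict (Metric.ball x (k + 1 : ℝ)), g y = 0 := by
    intro k
    have h1 := lintegral_ball_le g x (r := (k + 1 : ℝ)) (by positivity)
    rw [hx, mul_zero, nonpos_iff_eq_zero, lintegral_eq_zero_iff hg] at h1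
    exact h1
  have h2 : ∀ᵐ y ∂volume.restrict (⋃ k : ℕ, Metric.ball x (k + 1 : ℝ)), g y = 0 :=
    (ae_restrict_iUnion_iff _ _).2 h
  have h3 : (⋃ k : ℕ, Metric.ball x (k + 1 : ℝ)) = Set.univ := by
    refine Set.eq_univ_of_forall fun y => ?_
    obtain ⟨k, hk⟩ := exists_nat_gt (dist y x)
    exact Set.mem_iUnion.2 ⟨k, Metric.mem_ball.2 (by linarith)⟩
  rw [h3, Measure.restrict_univ] at h2
  exact h2

/-- Averages over balls of fixed radius are lower semicontinuous in the center, because the ball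
is exhausted by the smaller concentric balls. -/
lemma lowerSemicontinuous_hlMax {n : ℕ} (g : EuclideanSpace ℝ (Fin n) → ℝ≥0∞) :
    LowerSemicontinuous (hlMax g) := by
  refine lowerSemicontinuous_biSup fun r hr => ?_
  intro x a ha
  set V := volume (Metric.ball x r) with hV
  have hmono : Monotone fun k : ℕ => Metric.ball x (r - 1 / ((k : ℝ) + 1)) := by
    intro k l hkl
    refine Metric.ball_subset_ball ?_
    have : (1 : ℝ) / ((l : ℝ) + 1) ≤ 1 / ((k : ℝ) + 1) := by
      apply one_div_le_one_div_of_le (by positivity)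
      have : (k : ℝ) ≤ l := by exact_mod_cast hkl
      linarith
    linarith
  have hU : (⋃ k : ℕ, Metric.ball x (r - 1 / ((k : ℝ) + 1))) = Metric.ball x r := by
    ext y
    simp only [Set.mem_iUnion, Metric.mem_ball]
    constructor
    · rintro ⟨k, hk⟩
      have : (0 : ℝ) < 1 / ((k : ℝ) + 1) := by positivity
      linarith
    · intro hy
      obtain ⟨k, hk⟩ := exists_nat_one_div_lt (sub_pos.2 hy)
      exact ⟨k, by linarith⟩
  have hsup : V⁻¹ * ∫⁻ y in Metric.ball x r, g y =
      ⨆ k : ℕ, V⁻¹ * ∫⁻ y in Metric.ball x (r - 1 / ((k : ℝ) + 1)), g y := by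
    rw [← ENNReal.mul_iSup, ← withDensity_apply g measurableSet_ball, ← hU, hmono.measure_iUnion]
    congr 1
    exact iSup_congr fun k => withDensity_apply g measurableSet_ball
  have ha' : a < V⁻¹ * ∫⁻ y in Metric.ball x r, g y := ha
  rw [hsup] at ha'
  obtain ⟨k, hk⟩ := lt_iSup_iff.1 ha'
  have hpos : (0 : ℝ) < 1 / ((k : ℝ) + 1) := by positivity
  filter_upwards [Metric.ball_mem_nhds x hpos] with y hy
  refine hk.trans_le ?_
  have hVy : volume (Metric.ball y r) = V := by
    rw [hV, Measure.addHaar_ball_center, Measure.addHaar_ball_center volume x]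
  rw [hVy]
  gcongr
  intro z hz
  rw [Metric.mem_ball] at *
  have := dist_triangle_right z y x
  linarith

lemma measurable_hlMax {n : ℕ} (g : EuclideanSpace ℝ (Fin n) → ℝ≥0∞) : Measurable (hlMax g) :=
  (lowerSemicontinuous_hlMax g).measurable

lemma hlMax_tsum_le {n : ℕ} (c : ℕ → ℝ≥0∞) (g : ℕ → EuclideanSpace ℝ (Fin n) → ℝ≥0∞)
    (hg : ∀ k, Measurable (g k)) (x : EuclideanSpace ℝ (Fin n)) :
    hlMax (fun y => ∑' k, c k * g k y) x ≤ ∑' k, c k * hlMax (g k) x := by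
  refine hlMax_le fun r hr => ?_
  rw [lintegral_tsum fun k => ((hg k).const_mul _).aemeasurable, ← ENNReal.tsum_mul_left]
  refine ENNReal.tsum_le_tsum fun k => ?_
  rw [lintegral_const_mul _ (hg k), mul_left_comm]
  gcongr
  exact lintegral_ball_le _ _ hr

/-- Hölder's inequality on each ball, for conjugate exponents written as `a + b = 1`. -/
lemma hlMax_holder {n : ℕ} {g h : EuclideanSpace ℝ (Fin n) → ℝ≥0∞} (hg : Measurable g)
    (hh : Measurable h) {a b : ℝ} (ha : 0 < a) (hb : 0 < b) (hab : a + b = 1)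
    (x : EuclideanSpace ℝ (Fin n)) :
    hlMax (fun y => g y ^ a * h y ^ b) x ≤ hlMax g x ^ a * hlMax h x ^ b := by
  refine hlMax_le fun r hr => ?_
  have hpq : (1 / a).HolderConjugate (1 / b) := by
    rw [Real.holderConjugate_iff]
    refine ⟨?_, by simpa using hab⟩
    rw [lt_div_iff₀ ha]; linarith
  have key := ENNReal.lintegral_mul_le_Lp_mul_Lq (volume.restrict (Metric.ball x r)) hpq
    (f := fun y => g y ^ a) (g := fun y => h y ^ b)
    (hg.pow_const _).aemeasurable (hh.pow_const _).aemeasurable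
  simp only [Pi.mul_apply, ← ENNReal.rpow_mul, mul_one_div_cancel ha.ne',
    mul_one_div_cancel hb.ne', ENNReal.rpow_one, one_div_one_div] at key
  refine key.trans ?_
  calc (∫⁻ y in Metric.ball x r, g y) ^ a * (∫⁻ y in Metric.ball x r, h y) ^ b
      ≤ (volume (Metric.ball x r) * hlMax g x) ^ a * (volume (Metric.ball x r) * hlMax h x) ^ b := by
        gcongr
        · exact lintegral_ball_le _ _ hr
        · exact lintegral_ball_le _ _ hr
    _ = (volume (Metric.ball x r) ^ a * volume (Metric.ball x r) ^ b) *
          (hlMax g x ^ a * hlMax h x ^ b) := by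
        rw [ENNReal.mul_rpow_of_nonneg _ _ ha.le, ENNReal.mul_rpow_of_nonneg _ _ hb.le]; ring
    _ = _ := by
        rw [← ENNReal.rpow_add _ _ (volume_ball_pos x hr) (volume_ball_lt_top x), hab,
          ENNReal.rpow_one]

/-! ### The maximal theorem for `A₁` weights -/

/-- The estimate on a single ball behind the weak type inequality: for an `A₁` weight `u`, the
average of `u` over the dilated ball is controlled by the values of `u` on the ball itself. -/
lemma weak_ball {n : ℕ} {u g : EuclideanSpace ℝ (Fin n) → ℝ≥0∞}
    {K : ℝ≥0} (hu : ∀ᵐ x, hlMax u x ≤ K * u x)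
    {x : EuclideanSpace ℝ (Fin n)} {r : ℝ} (hr : 0 < r) {l : ℝ≥0∞}
    (hl : l * volume (Metric.ball x r) ≤ ∫⁻ y in Metric.ball x r, g y)
    (hg : Measurable g) (hum : Measurable u) :
    l * ∫⁻ y in Metric.ball x (6 * r), u y ≤
      (7 ^ n * K : ℝ≥0∞) * ∫⁻ y in Metric.ball x r, g y * u y := by
  set V := volume (Metric.ball x r) with hV
  have hV0 : V ≠ 0 := volume_ball_pos x hr
  have hVt : V ≠ ⊤ := volume_ball_lt_top x
  set U := ∫⁻ y in Metric.ball x (6 * r), u y with hU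
  have h1 : ∀ᵐ y ∂volume.restrict (Metric.ball x r), U ≤ (7 ^ n * K : ℝ≥0∞) * V * u y := by
    filter_upwards [ae_restrict_of_ae hu, ae_restrict_mem measurableSet_ball] with y hy hyx
    have hsub : Metric.ball x (6 * r) ⊆ Metric.ball y (7 * r) := by
      intro z hz
      rw [Metric.mem_ball] at *
      have := dist_triangle_right z y x
      linarith
    calc U ≤ ∫⁻ z in Metric.ball y (7 * r), u z := lintegral_mono_set hsub
      _ ≤ volume (Metric.ball y (7 * r)) * hlMax u y := lintegral_ball_le u y (by positivity)
      _ ≤ (7 ^ n * V) * (K * u y) := by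
          gcongr
          rw [Measure.addHaar_ball_mul_of_pos volume y (by norm_num), hV,
            Measure.addHaar_ball_center volume x]
          simp
      _ = _ := by ring
  have h2 : V * (l * U) ≤ V * ((7 ^ n * K : ℝ≥0∞) * ∫⁻ y in Metric.ball x r, g y * u y) := by
    calc V * (l * U) = (l * V) * U := by ring
      _ ≤ (∫⁻ y in Metric.ball x r, g y) * U := by gcongr
      _ = ∫⁻ y in Metric.ball x r, g y * U := by rw [lintegral_mul_const _ hg]
      _ ≤ ∫⁻ y in Metric.ball x r, ((7 ^ n * K : ℝ≥0∞) * V) * (g y * u y) := by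
          refine lintegral_mono_ae (h1.mono fun y hy => ?_)
          calc g y * U ≤ g y * ((7 ^ n * K : ℝ≥0∞) * V * u y) := by gcongr
            _ = _ := by ring
      _ = _ := by rw [lintegral_const_mul _ (show Measurable fun y => g y * u y by fun_prop)]; ring
  exact (ENNReal.mul_le_mul_iff_right hV0 hVt).1 h2

/-- Weak type `(1,1)` inequality for `A₁` weights, by the Vitali covering theorem. -/
lemma weak_type_s6 {n : ℕ} {u g : EuclideanSpace ℝ (Fin n) → ℝ≥0∞}
    {K : ℝ≥0} (hum : Measurable u) (hu : ∀ᵐ x, hlMax u x ≤ K * u x) (hg : Measurable g)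
    (l : ℝ≥0∞) :
    l * (volume.withDensity u) {x | l < hlMax g x} ≤ (7 ^ n * K : ℝ≥0∞) * ∫⁻ y, g y * u y := by
  -- Vitali's theorem requires bounded radii, so these are first truncated at `N`.
  let S : ℕ → Set (EuclideanSpace ℝ (Fin n)) := fun N =>
    {x | ∃ r : ℝ, 0 < r ∧ r ≤ N ∧ l * volume (Metric.ball x r) ≤ ∫⁻ y in Metric.ball x r, g y}
  have hSmono : Monotone S := by
    rintro N N' hNN x ⟨r, h0, h1, h2⟩
    exact ⟨r, h0, h1.trans (by exact_mod_cast hNN), h2⟩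
  have hsub : {x | l < hlMax g x} ⊆ ⋃ N, S N := by
    intro x hx
    obtain ⟨r, hr⟩ := lt_iSup_iff.1 (show l < hlMax g x from hx)
    obtain ⟨h0, hr⟩ := lt_iSup_iff.1 hr
    obtain ⟨N, hN⟩ := exists_nat_ge r
    refine Set.mem_iUnion.2 ⟨N, r, h0, hN, ?_⟩
    calc l * volume (Metric.ball x r)
        ≤ ((volume (Metric.ball x r))⁻¹ * ∫⁻ y in Metric.ball x r, g y) *
            volume (Metric.ball x r) := by gcongr
      _ = _ := by
        rw [mul_comm, ← mul_assoc,
          ENNReal.mul_inv_cancel (volume_ball_pos x h0) (volume_ball_lt_top x), one_mul]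
  have hN : ∀ N, l * (volume.withDensity u) (S N) ≤
      (7 ^ n * K : ℝ≥0∞) * ∫⁻ y, g y * u y := by
    intro N
    have hch : ∀ x : EuclideanSpace ℝ (Fin n), ∃ r : ℝ, x ∈ S N → 0 < r ∧ r ≤ N ∧
        l * volume (Metric.ball x r) ≤ ∫⁻ y in Metric.ball x r, g y := by
      intro x
      by_cases hx : x ∈ S N
      · obtain ⟨r, hr⟩ := hx; exact ⟨r, fun _ => hr⟩
      · exact ⟨0, fun h => absurd h hx⟩
    choose r hr using hch
    obtain ⟨t, htS, hdisj, hcov⟩ := Vitali.exists_disjoint_subfamily_covering_enlargement_closedBall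
      (S N) (fun x => x) r N (fun x hx => (hr x hx).2.1) 5 (by norm_num)
    have hdisj' : t.PairwiseDisjoint fun x => Metric.ball x (r x) :=
      hdisj.mono fun x => Metric.ball_subset_closedBall
    have hcount : t.Countable := hdisj'.countable_of_isOpen (fun _ _ => Metric.isOpen_ball)
      (fun x hx => Metric.nonempty_ball.2 (hr x (htS hx)).1)
    have hSt : S N ⊆ ⋃ x ∈ t, Metric.ball x (6 * r x) := by
      intro x hx
      obtain ⟨b, hb, hxb⟩ := hcov x hx
      have h1 := hxb (Metric.mem_closedBall_self (hr x hx).1.le)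
      refine Set.mem_iUnion₂.2 ⟨b, hb, ?_⟩
      have h2 := (hr b (htS hb)).1
      rw [Metric.mem_closedBall] at h1
      rw [Metric.mem_ball]
      linarith
    have := hcount.to_subtype
    calc l * (volume.withDensity u) (S N)
        ≤ l * ∑' x : t, (volume.withDensity u) (Metric.ball (x : EuclideanSpace ℝ (Fin n)) (6 * r x)) := by
          gcongr
          exact (measure_mono hSt).trans (measure_biUnion_le _ hcount _)
      _ = ∑' x : t, l * ∫⁻ y in Metric.ball (x : EuclideanSpace ℝ (Fin n)) (6 * r x), u y := by
          rw [ENNReal.tsum_mul_left]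
          congr 1
          exact tsum_congr fun x => withDensity_apply u measurableSet_ball
      _ ≤ ∑' x : t, (7 ^ n * K : ℝ≥0∞) *
            ∫⁻ y in Metric.ball (x : EuclideanSpace ℝ (Fin n)) (r x), g y * u y :=
          ENNReal.tsum_le_tsum fun x => weak_ball hu (hr x (htS x.2)).1 (hr x (htS x.2)).2.2 hg hum
      _ = (7 ^ n * K : ℝ≥0∞) * ∫⁻ y in ⋃ x ∈ t, Metric.ball x (r x), g y * u y := by
          rw [ENNReal.tsum_mul_left, lintegral_biUnion hcount (fun _ _ => measurableSet_ball) hdisj']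
      _ ≤ _ := by gcongr; exact Measure.restrict_le_self
  calc l * (volume.withDensity u) {x | l < hlMax g x}
      ≤ l * (volume.withDensity u) (⋃ N, S N) := by gcongr
    _ = ⨆ N, l * (volume.withDensity u) (S N) := by
        rw [hSmono.measure_iUnion, ENNReal.mul_iSup]
    _ ≤ _ := iSup_le hN

lemma lintegral_Ioo_rpow {b r : ℝ} (hb : 0 < b) (hr : 0 < r) :
    ∫⁻ t in Set.Ioo 0 b, ENNReal.ofReal (t ^ (r - 1)) = ENNReal.ofReal (b ^ r / r) := by
  have hIntv : IntervalIntegrable (fun t : ℝ => t ^ (r - 1)) volume 0 b :=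
    intervalIntegral.intervalIntegrable_rpow' (by linarith)
  rw [restrict_Ioo_eq_restrict_Ioc, ← ofReal_integral_eq_lintegral_ofReal
    ((intervalIntegrable_iff_integrableOn_Ioc_of_le hb.le).1 hIntv)]
  · rw [← intervalIntegral.integral_of_le hb.le, integral_rpow (Or.inl (by linarith))]
    simp [Real.zero_rpow hr.ne']
  · filter_upwards [ae_restrict_mem measurableSet_Ioc] with t ht
    exact Real.rpow_nonneg ht.1.le _

/-- The layer cake formula for a single extended nonnegative number. -/
lemma rpow_eq_layercake (a : ℝ≥0∞) {r : ℝ} (hr : 0 < r) :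
    a ^ r = ENNReal.ofReal r * ∫⁻ t in Set.Ioi (0 : ℝ),
      (if ENNReal.ofReal t < a then ENNReal.ofReal (t ^ (r - 1)) else 0) := by
  have key : ∀ b : ℝ, 0 < b → ENNReal.ofReal b ^ r = ENNReal.ofReal r * ∫⁻ t in Set.Ioo (0 : ℝ) b,
      ENNReal.ofReal (t ^ (r - 1)) := by
    intro b hb
    rw [lintegral_Ioo_rpow hb hr, ← ENNReal.ofReal_mul hr.le, ENNReal.ofReal_rpow_of_pos hb]
    congr 1; field_simp
  induction a with
  | top =>
    rw [ENNReal.top_rpow_of_pos hr]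
    symm
    rw [eq_top_iff]
    refine ENNReal.le_of_forall_nnreal_lt fun c hc => ?_
    have hc1 : (0 : ℝ) < ((c : ℝ) + 1) ^ (1 / r) := by positivity
    have := key _ hc1
    calc (c : ℝ≥0∞) ≤ ENNReal.ofReal (((c : ℝ) + 1) ^ (1 / r)) ^ r := by
          rw [ENNReal.ofReal_rpow_of_pos hc1, ← Real.rpow_mul (by positivity),
            one_div_mul_cancel hr.ne', Real.rpow_one, ← ENNReal.ofReal_coe_nnreal]
          exact ENNReal.ofReal_le_ofReal (by linarith)
      _ = _ := this
      _ ≤ _ := by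
          simp only [ENNReal.ofReal_lt_top, if_true]
          gcongr
          exact Set.Ioo_subset_Ioi_self
  | coe c =>
    rcases eq_or_ne c 0 with rfl | hc
    · simp [hr]
    have hc' : (0 : ℝ) < c := by positivity
    have := key _ hc'
    rw [ENNReal.ofReal_coe_nnreal] at this
    rw [this]
    congr 1
    rw [← lintegral_indicator measurableSet_Ioo, ← lintegral_indicator measurableSet_Ioi]
    refine lintegral_congr fun t => ?_
    by_cases h0 : 0 < t
    · have : ENNReal.ofReal t < c ↔ t < c := by
        rw [← ENNReal.ofReal_coe_nnreal, ENNReal.ofReal_lt_ofReal_iff hc']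
      by_cases h1 : t < c <;> simp [Set.indicator, h0, h1, this]
    · simp [Set.indicator, h0]

/-- The weighted maximal theorem for `A₁` weights, by Marcinkiewicz interpolation. -/
lemma strong_type_s6 {n : ℕ} {r : ℝ} (hr : 1 < r) (K : ℝ≥0) :
    ∃ C : ℝ≥0, ∀ u g : EuclideanSpace ℝ (Fin n) → ℝ≥0∞, Measurable u → Measurable g →
      (∀ᵐ x, hlMax u x ≤ K * u x) →
      ∫⁻ x, hlMax g x ^ r * u x ≤ C * ∫⁻ x, g x ^ r * u x := by
  have hr1 : 0 < r - 1 := by linarith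
  refine ⟨(r.toNNReal * (2 * (7 ^ n * K)) * (2 ^ (r - 1) * ((r - 1).toNNReal)⁻¹)),
    fun u g hum hg hu => ?_⟩
  -- Only the part of `g` exceeding `t / 2` contributes to `{Mg > t}`.
  have hdist : ∀ t : ℝ, 0 < t → ENNReal.ofReal t * (volume.withDensity u)
      {x | ENNReal.ofReal t < hlMax g x} ≤ (2 * (7 ^ n * K) : ℝ≥0∞) *
        ∫⁻ x, (if ENNReal.ofReal t < 2 * g x then g x * u x else 0) := by
    intro t ht
    have ht2 : ENNReal.ofReal t = 2 * ENNReal.ofReal (t / 2) := by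
      rw [← ENNReal.ofReal_ofNat, ← ENNReal.ofReal_mul (by norm_num)]; congr 1; ring
    set s := ENNReal.ofReal (t / 2) with hs
    have hst : s ≠ ⊤ := ENNReal.ofReal_ne_top
    set g' : EuclideanSpace ℝ (Fin n) → ℝ≥0∞ := fun x => if s < g x then g x else 0 with hg'
    have hset : MeasurableSet {x | s < g x} := measurableSet_lt measurable_const hg
    have hg'm : Measurable g' := Measurable.ite hset hg measurable_const
    have hle : ∀ x, hlMax g x ≤ hlMax g' x + s := by
      intro x
      refine hlMax_le fun ρ hρ => ?_
      calc ∫⁻ y in Metric.ball x ρ, g y ≤ ∫⁻ y in Metric.ball x ρ, (g' y + s) := by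
            refine lintegral_mono fun y => ?_
            by_cases h : s < g y
            · simp [hg', h]
            · simp [hg', h, not_lt.1 h]
        _ = (∫⁻ y in Metric.ball x ρ, g' y) + s * volume (Metric.ball x ρ) := by
            rw [lintegral_add_left hg'm, setLIntegral_const]
        _ ≤ volume (Metric.ball x ρ) * hlMax g' x + s * volume (Metric.ball x ρ) := by
            gcongr; exact lintegral_ball_le _ _ hρ
        _ = _ := by ring
    have hsub : {x | ENNReal.ofReal t < hlMax g x} ⊆ {x | s < hlMax g' x} := by
      intro x hx
      have h1 : 2 * s < hlMax g' x + s := by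
        rw [← ht2]; exact lt_of_lt_of_le hx (hle x)
      rw [two_mul] at h1
      exact lt_of_add_lt_add_right h1
    calc ENNReal.ofReal t * (volume.withDensity u) {x | ENNReal.ofReal t < hlMax g x}
        ≤ 2 * (s * (volume.withDensity u) {x | s < hlMax g' x}) := by
          rw [ht2, mul_assoc]; rw [ht2] at hsub; gcongr
      _ ≤ 2 * ((7 ^ n * K : ℝ≥0∞) * ∫⁻ y, g' y * u y) := by
          exact mul_le_mul_right (weak_type_s6 hum hu hg'm s) _
      _ = _ := by
          rw [← mul_assoc]
          congr 1
          refine lintegral_congr fun x => ?_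
          have : ENNReal.ofReal t < 2 * g x ↔ s < g x := by
            rw [ht2, ENNReal.mul_lt_mul_iff_right (by norm_num) (by norm_num)]
          by_cases h : s < g x <;> simp [hg', this, h]
  have hM := measurable_hlMax g
  calc ∫⁻ x, hlMax g x ^ r * u x
      = ∫⁻ x, ∫⁻ t in Set.Ioi (0 : ℝ), ENNReal.ofReal r *
          ((if ENNReal.ofReal t < hlMax g x then ENNReal.ofReal (t ^ (r - 1)) else 0) * u x) := by
        refine lintegral_congr fun x => ?_
        have hm : Measurable fun t : ℝ =>
            if ENNReal.ofReal t < hlMax g x then ENNReal.ofReal (t ^ (r - 1)) else 0 :=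
          Measurable.ite (measurableSet_lt (by fun_prop) measurable_const) (by fun_prop)
            measurable_const
        rw [lintegral_const_mul _ (hm.mul_const _), lintegral_mul_const _ hm,
          rpow_eq_layercake _ (by linarith : 0 < r), mul_assoc]
    _ = ∫⁻ t in Set.Ioi (0 : ℝ), ∫⁻ x, ENNReal.ofReal r *
          ((if ENNReal.ofReal t < hlMax g x then ENNReal.ofReal (t ^ (r - 1)) else 0) * u x) := by
        refine lintegral_lintegral_swap (Measurable.aemeasurable ?_)
        refine Measurable.const_mul (Measurable.mul ?_ (by fun_prop)) _
        exact Measurable.ite (measurableSet_lt (by fun_prop) (by fun_prop)) (by fun_prop)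
            measurable_const
    _ ≤ ∫⁻ t in Set.Ioi (0 : ℝ), ∫⁻ x, (ENNReal.ofReal r * (2 * (7 ^ n * K) : ℝ≥0∞)) *
          ((if ENNReal.ofReal t < 2 * g x then ENNReal.ofReal (t ^ (r - 1 - 1)) else 0) *
            (g x * u x)) := by
        refine setLIntegral_mono' measurableSet_Ioi fun t ht => ?_
        have ht : 0 < t := ht
        have hset : MeasurableSet {x | ENNReal.ofReal t < hlMax g x} :=
          measurableSet_lt measurable_const hM
        have e1 : ∫⁻ x, ENNReal.ofReal r *
            ((if ENNReal.ofReal t < hlMax g x then ENNReal.ofReal (t ^ (r - 1)) else 0) * u x)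
            = ENNReal.ofReal r * (ENNReal.ofReal (t ^ (r - 1)) * (volume.withDensity u)
              {x | ENNReal.ofReal t < hlMax g x}) := by
          have hm : Measurable fun x => (if ENNReal.ofReal t < hlMax g x then
              ENNReal.ofReal (t ^ (r - 1)) else 0) * u x :=
            (Measurable.ite hset measurable_const measurable_const).mul hum
          rw [lintegral_const_mul _ hm,
            withDensity_apply _ hset, ← lintegral_indicator hset,
            ← lintegral_const_mul _ (hum.indicator hset)]
          congr 1
          refine lintegral_congr fun x => ?_
          by_cases h : ENNReal.ofReal t < hlMax g x <;> simp [h]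
        have e2 : ∫⁻ x, (ENNReal.ofReal r * (2 * (7 ^ n * K) : ℝ≥0∞)) *
          ((if ENNReal.ofReal t < 2 * g x then ENNReal.ofReal (t ^ (r - 1 - 1)) else 0) *
            (g x * u x)) = ENNReal.ofReal r * (ENNReal.ofReal (t ^ (r - 1 - 1)) *
            ((2 * (7 ^ n * K) : ℝ≥0∞) *
              ∫⁻ x, (if ENNReal.ofReal t < 2 * g x then g x * u x else 0))) := by
          have hm : Measurable fun x => if ENNReal.ofReal t < 2 * g x then g x * u x else 0 :=
            Measurable.ite (measurableSet_lt (by fun_prop) (by fun_prop)) (by fun_prop)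
              measurable_const
          rw [← lintegral_const_mul _ hm, ← lintegral_const_mul _ (hm.const_mul _),
            ← lintegral_const_mul _ ((hm.const_mul _).const_mul _)]
          refine lintegral_congr fun x => ?_
          by_cases h : ENNReal.ofReal t < 2 * g x
          · simp only [h, if_true]; ring
          · simp [h]
        rw [e1, e2]
        refine mul_le_mul_right ?_ _
        have e3 : ENNReal.ofReal (t ^ (r - 1)) =
            ENNReal.ofReal (t ^ (r - 1 - 1)) * ENNReal.ofReal t := by
          rw [← ENNReal.ofReal_mul (by positivity)]
          congr 1
          nth_rewrite 3 [← Real.rpow_one t]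
          rw [← Real.rpow_add ht]; congr 1; ring
        rw [e3, mul_assoc]
        exact mul_le_mul_right (hdist t ht) _
    _ = ∫⁻ x, ∫⁻ t in Set.Ioi (0 : ℝ), (ENNReal.ofReal r * (2 * (7 ^ n * K) : ℝ≥0∞)) *
          ((if ENNReal.ofReal t < 2 * g x then ENNReal.ofReal (t ^ (r - 1 - 1)) else 0) *
            (g x * u x)) := by
        symm
        refine lintegral_lintegral_swap (Measurable.aemeasurable ?_)
        refine Measurable.const_mul (Measurable.mul ?_ (by fun_prop)) _
        exact Measurable.ite (measurableSet_lt (by fun_prop) (by fun_prop)) (by fun_prop)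
            measurable_const
    _ = ∫⁻ x, ((r.toNNReal * (2 * (7 ^ n * K)) * (2 ^ (r - 1) * ((r - 1).toNNReal)⁻¹) : ℝ≥0) : ℝ≥0∞)
          * (g x ^ r * u x) := by
        refine lintegral_congr fun x => ?_
        have hm : Measurable fun t : ℝ =>
            if ENNReal.ofReal t < 2 * g x then ENNReal.ofReal (t ^ (r - 1 - 1)) else 0 :=
          Measurable.ite (measurableSet_lt (by fun_prop) measurable_const) (by fun_prop)
            measurable_const
        rw [lintegral_const_mul _ (hm.mul_const _), lintegral_mul_const _ hm]
        have h1 := rpow_eq_layercake (2 * g x) hr1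
        have h0 : ENNReal.ofReal (r - 1) ≠ 0 := by simpa using hr1
        have h2 : ∫⁻ t in Set.Ioi (0 : ℝ),
            (if ENNReal.ofReal t < 2 * g x then ENNReal.ofReal (t ^ (r - 1 - 1)) else 0)
            = (ENNReal.ofReal (r - 1))⁻¹ * (2 * g x) ^ (r - 1) := by
          rw [h1, ← mul_assoc, ENNReal.inv_mul_cancel h0 ENNReal.ofReal_ne_top, one_mul]
        have h3 : g x ^ r = g x ^ (r - 1) * g x := by
          conv_lhs => rw [show r = (r - 1) + 1 by ring]
          rw [ENNReal.rpow_add_of_nonneg _ _ hr1.le zero_le_one, ENNReal.rpow_one]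
        have h4 : (r - 1).toNNReal ≠ 0 := by simpa using hr1
        rw [h2, ENNReal.mul_rpow_of_nonneg _ _ hr1.le, h3]
        push_cast [ENNReal.coe_inv h4, ENNReal.coe_rpow_of_nonneg _ hr1.le]
        simp only [ENNReal.ofReal]
        ring
    _ = _ := lintegral_const_mul _ (by fun_prop)

/-! ### Factored weights and the Rubio de Francia algorithm -/

/-- The weighted maximal theorem for a weight `u v ^ (-θ)` with `u`, `v` both in `A₁`. Since
`θ < q - 1`, Hölder's inequality on each ball against `v` leaves an exponent `q - θ > 1` for the
maximal theorem with the `A₁` weight `u`. -/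
lemma factored_type {n : ℕ} {q θ : ℝ} (hθ : 0 < θ) (hθq : θ < q - 1) (K₁ K₂ : ℝ≥0) :
    ∃ C : ℝ≥0, ∀ u v g : EuclideanSpace ℝ (Fin n) → ℝ≥0∞,
      Measurable u → Measurable v → Measurable g →
      (∀ᵐ x, hlMax u x ≤ K₁ * u x) → (∀ᵐ x, hlMax v x ≤ K₂ * v x) →
      (∀ᵐ x, v x ≠ 0 ∧ v x ≠ ⊤) →
      ∫⁻ x, hlMax g x ^ q * (u x * v x ^ (-θ)) ≤ C * ∫⁻ x, g x ^ q * (u x * v x ^ (-θ)) := by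
  obtain ⟨C, hC⟩ := strong_type_s6 (n := n) (r := q - θ) (by linarith) K₁
  refine ⟨K₂ ^ θ * C, fun u v g hum hvm hg hu hv hv0 => ?_⟩
  have hq : 0 < q := by linarith
  set a := (q - θ) / q with ha
  set b := θ / q with hb
  have ha0 : 0 < a := div_pos (by linarith) hq
  have hb0 : 0 < b := div_pos hθ hq
  have hab : a + b = 1 := by rw [ha, hb]; field_simp; ring
  have haq : a * q = q - θ := by rw [ha]; field_simp
  have hbq : b * q = θ := by rw [hb]; field_simp
  set G : EuclideanSpace ℝ (Fin n) → ℝ≥0∞ := fun x => (g x * v x ^ (-b)) ^ (1 / a) with hG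
  have hGm : Measurable G := by fun_prop
  have hgG : g =ᵐ[volume] fun x => G x ^ a * v x ^ b := by
    filter_upwards [hv0] with x hx
    rw [hG]
    dsimp only
    rw [← ENNReal.rpow_mul, one_div_mul_cancel ha0.ne', ENNReal.rpow_one, mul_assoc,
      ← ENNReal.rpow_add _ _ hx.1 hx.2]
    simp
  have hpt : ∀ᵐ x, hlMax g x ^ q * (u x * v x ^ (-θ)) ≤
      (K₂ : ℝ≥0∞) ^ θ * (hlMax G x ^ (q - θ) * u x) := by
    filter_upwards [hv, hv0] with x hx hx0
    calc hlMax g x ^ q * (u x * v x ^ (-θ))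
        ≤ (hlMax G x ^ a * (K₂ * v x) ^ b) ^ q * (u x * v x ^ (-θ)) := by
          rw [hlMax_congr_ae hgG]
          gcongr
          refine (hlMax_holder hGm hvm ha0 hb0 hab x).trans ?_
          gcongr
      _ = (K₂ : ℝ≥0∞) ^ θ * (hlMax G x ^ (q - θ) * u x) * (v x ^ θ * v x ^ (-θ)) := by
          rw [ENNReal.mul_rpow_of_nonneg _ _ hq.le, ← ENNReal.rpow_mul, ← ENNReal.rpow_mul, haq,
            hbq, ENNReal.mul_rpow_of_nonneg _ _ hθ.le]
          ring
      _ = _ := by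
          rw [← ENNReal.rpow_add _ _ hx0.1 hx0.2]; simp
  have hM := measurable_hlMax G
  calc ∫⁻ x, hlMax g x ^ q * (u x * v x ^ (-θ))
      ≤ ∫⁻ x, (K₂ : ℝ≥0∞) ^ θ * (hlMax G x ^ (q - θ) * u x) := lintegral_mono_ae hpt
    _ = (K₂ : ℝ≥0∞) ^ θ * ∫⁻ x, hlMax G x ^ (q - θ) * u x :=
        lintegral_const_mul _ (by fun_prop)
    _ ≤ (K₂ : ℝ≥0∞) ^ θ * (C * ∫⁻ x, G x ^ (q - θ) * u x) := by
        gcongr; exact hC u G hum hGm hu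
    _ = _ := by
        rw [← mul_assoc, ENNReal.coe_mul, ENNReal.coe_rpow_of_nonneg _ hθ.le]
        congr 1
        refine lintegral_congr fun x => ?_
        rw [hG]
        dsimp only
        have e : 1 / a * (q - θ) = q := by rw [← haq]; field_simp
        rw [← ENNReal.rpow_mul, e, ENNReal.mul_rpow_of_nonneg _ _ hq.le, ← ENNReal.rpow_mul,
          neg_mul, hbq]
        ring

/-- The Rubio de Francia algorithm: if the maximal operator is bounded on `L^p(w)`, every `h` has
an `A₁` majorant of comparable `L^p(w)` norm, namely `∑ (2D)⁻ᵏ Mᵏ h` for large `D`. -/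
lemma rubio_de_francia {n : ℕ} {p : ℝ} (hp : 0 < p) {w : EuclideanSpace ℝ (Fin n) → ℝ≥0∞}
    (hw : Measurable w) {C : ℝ≥0}
    (hC : ∀ g : EuclideanSpace ℝ (Fin n) → ℝ≥0∞, Measurable g →
      ∫⁻ x, hlMax g x ^ p * w x ≤ C * ∫⁻ x, g x ^ p * w x) :
    ∃ K C' : ℝ≥0, ∀ h : EuclideanSpace ℝ (Fin n) → ℝ≥0∞, Measurable h →
      ∃ v : EuclideanSpace ℝ (Fin n) → ℝ≥0∞, Measurable v ∧ (∀ x, h x ≤ v x) ∧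
        (∀ x, hlMax v x ≤ K * v x) ∧ ∫⁻ x, v x ^ p * w x ≤ C' * ∫⁻ x, h x ^ p * w x := by
  set D : ℝ≥0 := (2 * (C + 1)) ^ (1 / p) with hD
  have hD0 : D ≠ 0 := by
    have : (0 : ℝ≥0) < (2 * (C + 1)) ^ (1 / p) := NNReal.rpow_pos (by positivity)
    exact this.ne'
  have hDp : (D : ℝ≥0∞) ^ p = 2 * (C + 1) := by
    rw [← ENNReal.coe_rpow_of_nonneg _ hp.le, hD, ← NNReal.rpow_mul, one_div_mul_cancel hp.ne',
      NNReal.rpow_one]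
    push_cast; rfl
  have hD0' : (D : ℝ≥0∞) ≠ 0 := by exact_mod_cast hD0
  have hDt : (D : ℝ≥0∞) ≠ ⊤ := ENNReal.coe_ne_top
  refine ⟨2 * D, 2 ^ p * 2, fun h hh => ?_⟩
  let m : ℕ → EuclideanSpace ℝ (Fin n) → ℝ≥0∞ := fun k => hlMax^[k] h
  have hm0 : m 0 = h := rfl
  have hms : ∀ k, m (k + 1) = hlMax (m k) := fun k => Function.iterate_succ_apply' _ _ _
  have hmm : ∀ k, Measurable (m k) := by
    intro k
    cases k with
    | zero => exact hh
    | succ k => rw [hms]; exact measurable_hlMax _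
  have hmint : ∀ k, ∫⁻ x, m k x ^ p * w x ≤ (C : ℝ≥0∞) ^ k * ∫⁻ x, h x ^ p * w x := by
    intro k
    induction k with
    | zero => simp [hm0]
    | succ k ih =>
      rw [hms]
      refine (hC _ (hmm k)).trans ?_
      rw [pow_succ', mul_assoc]
      gcongr
  have h2D0 : (2 * D : ℝ≥0∞) ≠ 0 := mul_ne_zero (by norm_num) hD0'
  have h2Dt : (2 * D : ℝ≥0∞) ≠ ⊤ := ENNReal.mul_ne_top (by norm_num) hDt
  let c : ℝ≥0∞ := (2 * D : ℝ≥0∞)⁻¹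
  have hcD : (2 * D : ℝ≥0∞) * c = 1 := ENNReal.mul_inv_cancel h2D0 h2Dt
  refine ⟨fun x => ∑' k, c ^ k * m k x, ?_, ?_, ?_, ?_⟩
  · exact Measurable.tsum fun k => (hmm k).const_mul _
  · intro x
    refine le_trans ?_ (ENNReal.le_tsum 0)
    simp [hm0]
  · intro x
    refine (hlMax_tsum_le _ _ hmm x).trans ?_
    push_cast
    have e : ∀ k, c ^ k * hlMax (m k) x = (2 * D : ℝ≥0∞) * (c ^ (k + 1) * m (k + 1) x) := by
      intro k
      rw [hms, pow_succ', ← mul_assoc, ← mul_assoc, hcD, one_mul]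
    simp_rw [e]
    rw [ENNReal.tsum_mul_left]
    exact mul_le_mul_right (ENNReal.tsum_comp_le_tsum_of_injective (add_left_injective 1)
      fun k => c ^ k * m k x) _
  · -- each term is at most `2⁻ᵏ` times the `ℓ^p` norm of the sequence `D⁻ᵏ Mᵏ h`
    let b : ℕ → EuclideanSpace ℝ (Fin n) → ℝ≥0∞ := fun k x => (D : ℝ≥0∞)⁻¹ ^ k * m k x
    have hbm : ∀ k, Measurable (b k) := fun k => (hmm k).const_mul _
    have hle : ∀ x, (∑' k, c ^ k * m k x) ^ p ≤ (2 : ℝ≥0∞) ^ p * ∑' k, b k x ^ p := by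
      intro x
      have h1 : ∀ k, c ^ k * m k x ≤ (2⁻¹ : ℝ≥0∞) ^ k * (∑' k, b k x ^ p) ^ (1 / p) := by
        intro k
        have e : c ^ k * m k x = (2⁻¹ : ℝ≥0∞) ^ k * b k x := by
          have : c = 2⁻¹ * (D : ℝ≥0∞)⁻¹ :=
            ENNReal.mul_inv (Or.inl (by norm_num)) (Or.inl (by norm_num))
          simp only [b]
          rw [this, mul_pow, mul_assoc]
        rw [e]
        gcongr
        calc b k x = (b k x ^ p) ^ (1 / p) := by
              rw [← ENNReal.rpow_mul, mul_one_div_cancel hp.ne', ENNReal.rpow_one]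
          _ ≤ _ := by
              gcongr
              exact ENNReal.le_tsum (f := fun k => b k x ^ p) k
      calc (∑' k, c ^ k * m k x) ^ p
          ≤ (∑' k, (2⁻¹ : ℝ≥0∞) ^ k * (∑' k, b k x ^ p) ^ (1 / p)) ^ p := by
            exact ENNReal.rpow_le_rpow (ENNReal.tsum_le_tsum h1) hp.le
        _ = _ := by
            rw [ENNReal.tsum_mul_right, ENNReal.tsum_geometric, ENNReal.one_sub_inv_two, inv_inv,
              ENNReal.mul_rpow_of_nonneg _ _ hp.le, ← ENNReal.rpow_mul, one_div_mul_cancel hp.ne',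
              ENNReal.rpow_one]
    calc ∫⁻ x, (∑' k, c ^ k * m k x) ^ p * w x
        ≤ ∫⁻ x, (2 : ℝ≥0∞) ^ p * ∑' k, b k x ^ p * w x := by
          refine lintegral_mono fun x => ?_
          dsimp only
          rw [ENNReal.tsum_mul_right, ← mul_assoc]
          gcongr
          exact hle x
      _ = (2 : ℝ≥0∞) ^ p * ∑' k, ∫⁻ x, b k x ^ p * w x := by
          have hb' : ∀ k, Measurable fun x => b k x ^ p * w x := fun k =>
            ((hbm k).pow_const _).mul hw
          rw [lintegral_const_mul _ (Measurable.tsum hb'),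
            lintegral_tsum fun k => (hb' k).aemeasurable]
      _ ≤ (2 : ℝ≥0∞) ^ p * ∑' k : ℕ, (2⁻¹ : ℝ≥0∞) ^ k * ∫⁻ x, h x ^ p * w x := by
          gcongr with k
          have e : ∀ x, b k x ^ p * w x =
              ((2 * (C + 1) : ℝ≥0∞)⁻¹) ^ k * (m k x ^ p * w x) := by
            intro x
            have e1 : ((D : ℝ≥0∞)⁻¹ ^ k) ^ p = ((2 * (C + 1) : ℝ≥0∞)⁻¹) ^ k := by
              rw [← hDp, ← ENNReal.inv_rpow, ← ENNReal.rpow_natCast, ← ENNReal.rpow_mul,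
                mul_comm (k : ℝ) p, ENNReal.rpow_mul, ENNReal.rpow_natCast]
            simp only [b]
            rw [ENNReal.mul_rpow_of_nonneg _ _ hp.le, e1, mul_assoc]
          simp_rw [e]
          have hm' : Measurable fun x => m k x ^ p * w x := ((hmm k).pow_const _).mul hw
          rw [lintegral_const_mul _ hm']
          refine (mul_le_mul_right (hmint k) _).trans ?_
          rw [← mul_assoc, ← mul_pow]
          gcongr
          rw [ENNReal.mul_inv (Or.inl (by norm_num)) (Or.inl (by norm_num)), mul_assoc]
          calc (2 : ℝ≥0∞)⁻¹ * (((C : ℝ≥0∞) + 1)⁻¹ * C)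
              ≤ 2⁻¹ * (((C : ℝ≥0∞) + 1)⁻¹ * (C + 1)) := by gcongr; exact le_self_add
            _ = 2⁻¹ := by
                rw [ENNReal.inv_mul_cancel (by positivity) (by finiteness), mul_one]
      _ = _ := by
          rw [ENNReal.tsum_mul_right, ENNReal.tsum_geometric, ENNReal.one_sub_inv_two, inv_inv]
          push_cast [ENNReal.coe_rpow_of_nonneg _ hp.le]
          ring

/-! ### Power weights -/

/-- The power weight `|x| ^ α`; the value at the origin (`⊤` when `α < 0`) is irrelevant. -/
def powW (n : ℕ) (α : ℝ) (x : EuclideanSpace ℝ (Fin n)) : ℝ≥0∞ := (‖x‖₊ : ℝ≥0∞) ^ α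

lemma measurable_powW (n : ℕ) (α : ℝ) : Measurable (powW n α) := by
  unfold powW; fun_prop

lemma powW_ne_zero {n : ℕ} {α : ℝ} {x : EuclideanSpace ℝ (Fin n)} (hx : x ≠ 0) :
    powW n α x ≠ 0 := by
  unfold powW
  have : (‖x‖₊ : ℝ≥0∞) ≠ 0 := by simpa using hx
  simp [ENNReal.rpow_eq_zero_iff, this]

lemma powW_ne_top {n : ℕ} {α : ℝ} {x : EuclideanSpace ℝ (Fin n)} (hx : x ≠ 0) :
    powW n α x ≠ ⊤ := by
  unfold powW
  have : (‖x‖₊ : ℝ≥0∞) ≠ 0 := by simpa using hx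
  simp [ENNReal.rpow_eq_top_iff, this]

lemma powW_rpow {n : ℕ} (α β : ℝ) (x : EuclideanSpace ℝ (Fin n)) :
    powW n α x ^ β = powW n (α * β) x := (ENNReal.rpow_mul _ _ _).symm

lemma powW_mul {n : ℕ} (α β : ℝ) {x : EuclideanSpace ℝ (Fin n)} (hx : x ≠ 0) :
    powW n α x * powW n β x = powW n (α + β) x :=
  (ENNReal.rpow_add _ _ (by simpa using hx) (by simp)).symm

lemma ae_ne_zero {n : ℕ} (hn : 1 ≤ n) : ∀ᵐ x : EuclideanSpace ℝ (Fin n), x ≠ 0 := by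
  have : Nonempty (Fin n) := ⟨⟨0, hn⟩⟩
  rw [ae_iff]
  simp

lemma lintegral_powW_lt_top {n : ℕ} (hn : 1 ≤ n) {β : ℝ} (hβ : -(n : ℝ) < β) (R : ℝ) :
    ∫⁻ y in Metric.ball (0 : EuclideanSpace ℝ (Fin n)) R, powW n β y < ⊤ := by
  have : Nonempty (Fin n) := ⟨⟨0, hn⟩⟩
  by_cases hR : 0 < R
  · have h1 : IntegrableOn (fun x : EuclideanSpace ℝ (Fin n) => ‖x‖ ^ β) (Metric.ball 0 R) := by
      rw [integrableOn_fun_norm_addHaar volume (f := fun y : ℝ => y ^ β)]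
      have h2 : IntegrableOn (fun y : ℝ => y ^ ((n : ℝ) - 1 + β)) (Set.Ioo 0 R) :=
        (intervalIntegral.integrableOn_Ioo_rpow_iff hR).2 (by linarith)
      refine h2.congr_fun (fun y hy => ?_) measurableSet_Ioo
      have hy0 : 0 < y := hy.1
      simp only [finrank_euclideanSpace, Fintype.card_fin, smul_eq_mul]
      rw [Real.rpow_add hy0, ← Real.rpow_natCast, Nat.cast_sub hn, Nat.cast_one]
    refine lt_of_le_of_lt (lintegral_mono_ae ?_) h1.2
    filter_upwards [ae_restrict_of_ae (ae_ne_zero hn)] with x hx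
    have hx' : 0 < ‖x‖ := norm_pos_iff.2 hx
    rw [Real.enorm_eq_ofReal (by positivity), ← ENNReal.ofReal_rpow_of_pos hx', ofReal_norm]
    rfl
  · rw [Metric.ball_eq_empty.2 (not_lt.1 hR)]
    simp

lemma lintegral_powW_ball {n : ℕ} {β : ℝ} {R : ℝ} (hR : 0 < R) :
    ∫⁻ y in Metric.ball (0 : EuclideanSpace ℝ (Fin n)) R, powW n β y =
      ENNReal.ofReal R ^ n * (ENNReal.ofReal R ^ β *
        ∫⁻ y in Metric.ball (0 : EuclideanSpace ℝ (Fin n)) 1, powW n β y) := by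
  have hm : Measurable ((Metric.ball (0 : EuclideanSpace ℝ (Fin n)) R).indicator (powW n β)) :=
    (measurable_powW n β).indicator measurableSet_ball
  have h1 := lintegral_map (μ := (volume : Measure (EuclideanSpace ℝ (Fin n)))) hm
    (measurable_const_smul R)
  rw [Measure.map_addHaar_smul _ hR.ne', lintegral_smul_measure,
    lintegral_indicator measurableSet_ball] at h1
  have h2 : ∀ x : EuclideanSpace ℝ (Fin n),
      (Metric.ball (0 : EuclideanSpace ℝ (Fin n)) R).indicator (powW n β) (R • x) =
      ENNReal.ofReal R ^ β * (Metric.ball (0 : EuclideanSpace ℝ (Fin n)) 1).indicator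
        (powW n β) x := by
    intro x
    have hmem : R • x ∈ Metric.ball (0 : EuclideanSpace ℝ (Fin n)) R ↔
        x ∈ Metric.ball (0 : EuclideanSpace ℝ (Fin n)) 1 := by
      simp only [mem_ball_zero_iff, norm_smul, Real.norm_eq_abs, abs_of_pos hR]
      rw [mul_lt_iff_lt_one_right hR]
    by_cases hx : x ∈ Metric.ball (0 : EuclideanSpace ℝ (Fin n)) 1
    · rw [Set.indicator_of_mem (hmem.2 hx), Set.indicator_of_mem hx]
      unfold powW
      have e : (‖R • x‖₊ : ℝ≥0∞) = ENNReal.ofReal R * ‖x‖₊ := by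
        rw [nnnorm_smul, ENNReal.coe_mul, ← enorm_eq_nnnorm R, Real.enorm_eq_ofReal hR.le]
      rw [e, ENNReal.mul_rpow_of_ne_top ENNReal.ofReal_ne_top ENNReal.coe_ne_top]
    · rw [Set.indicator_of_notMem (fun h => hx (hmem.1 h)), Set.indicator_of_notMem hx, mul_zero]
  simp_rw [h2] at h1
  rw [lintegral_const_mul _ ((measurable_powW n β).indicator measurableSet_ball),
    lintegral_indicator measurableSet_ball] at h1
  rw [← h1, finrank_euclideanSpace, Fintype.card_fin, smul_eq_mul, ← mul_assoc,
    ← ENNReal.ofReal_pow hR.le, ← ENNReal.ofReal_mul (by positivity), abs_of_pos (by positivity),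
    mul_inv_cancel₀ (by positivity), ENNReal.ofReal_one, one_mul]

lemma rpow_antitone_of_nonpos {a b : ℝ≥0∞} {β : ℝ} (hβ : β ≤ 0) (h : a ≤ b) : b ^ β ≤ a ^ β := by
  rw [show β = -(-β) by ring, ENNReal.rpow_neg b, ENNReal.rpow_neg a]
  exact ENNReal.inv_le_inv.2 (ENNReal.rpow_le_rpow h (by linarith))

/-- The powers `|x| ^ β` with `-n < β ≤ 0` are `A₁` weights. -/
lemma powW_A1 {n : ℕ} (hn : 1 ≤ n) {β : ℝ} (hβ : -(n : ℝ) < β) (hβ0 : β ≤ 0) :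
    ∃ K : ℝ≥0, ∀ᵐ x : EuclideanSpace ℝ (Fin n), hlMax (powW n β) x ≤ K * powW n β x := by
  set J := ∫⁻ y in Metric.ball (0 : EuclideanSpace ℝ (Fin n)) 1, powW n β y with hJ
  set V := volume (Metric.ball (0 : EuclideanSpace ℝ (Fin n)) 1) with hV
  have hJt : J ≠ ⊤ := (lintegral_powW_lt_top hn hβ 1).ne
  have hV0 : V ≠ 0 := volume_ball_pos _ one_pos
  have hVt : V ≠ ⊤ := volume_ball_lt_top _
  have hKt : (2⁻¹ : ℝ≥0∞) ^ β + 3 ^ n * (V⁻¹ * J) ≠ ⊤ := by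
    have h2 : (2⁻¹ : ℝ≥0∞) ^ β ≠ ⊤ := by simp [ENNReal.rpow_eq_top_iff]
    have h3 : V⁻¹ ≠ ⊤ := ENNReal.inv_ne_top.2 hV0
    finiteness
  refine ⟨((2⁻¹ : ℝ≥0∞) ^ β + 3 ^ n * (V⁻¹ * J)).toNNReal, ?_⟩
  rw [ENNReal.coe_toNNReal hKt]
  filter_upwards [ae_ne_zero hn] with x hx
  have hx' : 0 < ‖x‖ := norm_pos_iff.2 hx
  refine hlMax_le fun r hr => ?_
  rcases le_or_gt r (‖x‖ / 2) with h | h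
  · -- far from the origin the weight is essentially constant on the ball
    calc ∫⁻ y in Metric.ball x r, powW n β y
        ≤ ∫⁻ y in Metric.ball x r, (2⁻¹ : ℝ≥0∞) ^ β * powW n β x := by
          refine setLIntegral_mono' measurableSet_ball fun y hy => ?_
          unfold powW
          rw [← ENNReal.mul_rpow_of_ne_top (by norm_num) ENNReal.coe_ne_top]
          refine rpow_antitone_of_nonpos hβ0 ?_
          have h1 : ‖x‖ / 2 ≤ ‖y‖ := by
            rw [mem_ball_iff_norm] at hy
            have := norm_sub_norm_le x y
            rw [norm_sub_rev] at this
            linarith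
          have h2 : (2⁻¹ : ℝ≥0) * ‖x‖₊ ≤ ‖y‖₊ := by
            rw [← NNReal.coe_le_coe]; push_cast; linarith
          have h3 : ((2⁻¹ : ℝ≥0) : ℝ≥0∞) * ‖x‖₊ ≤ ‖y‖₊ := by exact_mod_cast h2
          simpa using h3
      _ = volume (Metric.ball x r) * ((2⁻¹ : ℝ≥0∞) ^ β * powW n β x) := by
          rw [setLIntegral_const, mul_comm]
      _ ≤ _ := by gcongr; exact le_self_add
  · -- otherwise the ball is contained in a comparable ball around the origin
    have hsub : Metric.ball x r ⊆ Metric.ball 0 (3 * r) := by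
      intro y hy
      rw [mem_ball_iff_norm] at hy
      rw [mem_ball_zero_iff]
      have := norm_le_norm_add_norm_sub' y x
      linarith
    calc ∫⁻ y in Metric.ball x r, powW n β y
        ≤ ∫⁻ y in Metric.ball 0 (3 * r), powW n β y := lintegral_mono_set hsub
      _ = ENNReal.ofReal (3 * r) ^ n * (ENNReal.ofReal (3 * r) ^ β * J) :=
          lintegral_powW_ball (by positivity)
      _ ≤ ENNReal.ofReal (3 * r) ^ n * (powW n β x * J) := by
          gcongr
          refine rpow_antitone_of_nonpos hβ0 ?_
          rw [← enorm_eq_nnnorm, ← ofReal_norm]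
          exact ENNReal.ofReal_le_ofReal (by linarith)
      _ = (ENNReal.ofReal r ^ n * V) * ((3 ^ n * (V⁻¹ * J)) * powW n β x) := by
          rw [ENNReal.ofReal_mul (by norm_num), mul_pow]
          have : V * V⁻¹ = 1 := ENNReal.mul_inv_cancel hV0 hVt
          calc _ = ENNReal.ofReal 3 ^ n * ENNReal.ofReal r ^ n * (powW n β x * J) * 1 := by ring
            _ = _ := by rw [← this, ENNReal.ofReal_ofNat]; ring
      _ = volume (Metric.ball x r) * ((3 ^ n * (V⁻¹ * J)) * powW n β x) := by
          rw [Measure.addHaar_ball_of_pos volume x hr, finrank_euclideanSpace, Fintype.card_fin,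
            ENNReal.ofReal_pow hr.le]
      _ ≤ _ := by gcongr; exact le_add_self

/-- The scalar maximal theorem for power weights in the full Muckenhoupt range.
For `α > 0` one writes `|x| ^ α = v ^ (-θ)` with the `A₁` weight `v = |x| ^ (-α / θ)`. -/
lemma powW_type {n : ℕ} (hn : 1 ≤ n) {q α : ℝ} (hq : 1 < q) (hα1 : -(n : ℝ) < α)
    (hα2 : α < n * (q - 1)) :
    ∃ C : ℝ≥0, ∀ g : EuclideanSpace ℝ (Fin n) → ℝ≥0∞, Measurable g →
      ∫⁻ x, hlMax g x ^ q * powW n α x ≤ C * ∫⁻ x, g x ^ q * powW n α x := by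
  rcases le_or_gt α 0 with h | h
  · obtain ⟨K, hK⟩ := powW_A1 hn hα1 h
    obtain ⟨C, hC⟩ := strong_type_s6 (n := n) hq K
    exact ⟨C, fun g hg => hC _ g (measurable_powW n α) hg hK⟩
  · have hn0 : (0 : ℝ) < n := by exact_mod_cast hn
    obtain ⟨θ, hθ1, hθ2⟩ := exists_between (show α / n < q - 1 by rwa [div_lt_iff₀' hn0])
    have hθ0 : 0 < θ := lt_trans (by positivity) hθ1
    rw [div_lt_iff₀' hn0] at hθ1
    obtain ⟨K, hK⟩ := powW_A1 hn (β := -(α / θ))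
      (by rw [neg_lt_neg_iff, div_lt_iff₀ hθ0]; exact hθ1) (by simp; positivity)
    obtain ⟨C, hC⟩ := factored_type (n := n) hθ0 hθ2 1 K
    refine ⟨C, fun g hg => ?_⟩
    have := hC (fun _ => 1) (powW n (-(α / θ))) g measurable_const (measurable_powW _ _) hg
      (Filter.Eventually.of_forall fun x => hlMax_le fun r hr => by simp) hK
      ((ae_ne_zero hn).mono fun x hx => ⟨powW_ne_zero hx, powW_ne_top hx⟩)
    have e : -(α / θ) * -θ = α := by field_simp
    simpa only [powW_rpow, e, one_mul] using this

/-! ### Extrapolation and the vector-valued inequality -/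

/-- The vector-valued inequality in dual form. The pair `v ^ (s / p)`, `u` of majorants of `G` and
of `h |x| ^ α` given by the Rubio de Francia algorithm turns `u v ^ (-θ)` into a weight for which
the scalar maximal theorem holds at the exponent `q`, where summing over `j` is harmless. -/
lemma extrapolation {n : ℕ} (hn : 1 ≤ n) {p q α : ℝ} (hp : 1 < p) (hq : 1 < q)
    (hα1 : -(n : ℝ) < α) (hα2 : α < n * (p - 1)) :
    ∃ C : ℝ≥0, ∀ g : ℕ → EuclideanSpace ℝ (Fin n) → ℝ≥0∞, (∀ j, Measurable (g j)) →
      ∀ h : EuclideanSpace ℝ (Fin n) → ℝ≥0∞, Measurable h →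
      ∫⁻ x, ((∑' j, g j x ^ q) ^ (1 / q)) ^ p * powW n α x ≠ ⊤ →
      ∫⁻ x, (∑' j, hlMax (g j) x ^ q) ^ (1 / q) * (h x * powW n α x) ≤
        C * ((∫⁻ x, ((∑' j, g j x ^ q) ^ (1 / q)) ^ p * powW n α x) ^ (1 / p) *
          (∫⁻ x, h x ^ (p / (p - 1)) * powW n α x) ^ (1 - 1 / p)) := by
  have hn0 : (0 : ℝ) < n := by exact_mod_cast hn
  have hp0 : 0 < p := by linarith
  have hq0 : 0 < q := by linarith
  have hp1 : 0 < p - 1 := by linarith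
  have hq1 : 0 < q - 1 := by linarith
  -- some `1 < s < p` still satisfies `α < n * (s - 1)`, as the condition on the exponent is open
  obtain ⟨s, hs1, hsp⟩ := exists_between (show max 1 (α / n + 1) < p by
    rw [max_lt_iff]
    refine ⟨hp, ?_⟩
    have : α / n < p - 1 := by rwa [div_lt_iff₀' hn0]
    linarith)
  rw [max_lt_iff] at hs1
  obtain ⟨hs1, hsα⟩ := hs1
  have hs0 : 0 < s := by linarith
  have hsα' : α < n * (s - 1) := by
    rw [← div_lt_iff₀' hn0]; linarith
  set p' := p / (p - 1) with hp'
  set β := -(α / (p - 1)) with hβ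
  have hp'1 : 1 < p' := by rw [hp', lt_div_iff₀ hp1]; linarith
  have hp'0 : 0 < p' := by linarith
  have hpp' : p.HolderConjugate p' := Real.HolderConjugate.conjExponent hp
  have hip' : 1 / p' = 1 - 1 / p := by rw [hp']; field_simp
  set θ := (q - 1) * (s / p) with hθ
  have hsp1 : s / p < 1 := by rwa [div_lt_one hp0]
  have hsp0 : 0 < s / p := by positivity
  have hθ0 : 0 < θ := by positivity
  have hθq : θ < q - 1 := by rw [hθ]; nlinarith
  obtain ⟨A, hA⟩ := powW_type hn hs1 hα1 hsα'
  obtain ⟨K₂, C₂, hR₂⟩ := rubio_de_francia hs0 (measurable_powW n α) hA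
  obtain ⟨B, hB⟩ := powW_type hn (q := p') (α := β) hp'1
    (by rw [hβ, neg_lt_neg_iff, div_lt_iff₀ hp1]; exact hα2)
    (by
      have e : p' - 1 = 1 / (p - 1) := by rw [hp']; field_simp; ring
      rw [e, hβ, ← neg_div, mul_one_div]
      exact div_lt_div_of_pos_right (by linarith) hp1)
  obtain ⟨K₁, C₁, hR₁⟩ := rubio_de_francia hp'0 (measurable_powW n β) hB
  obtain ⟨D, hD⟩ := factored_type (n := n) hθ0 hθq K₁ K₂
  refine ⟨D ^ (1 / q) * (C₂ ^ (1 / p) * C₁ ^ (1 - 1 / p)), fun g hg h hh hfin => ?_⟩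
  set G : EuclideanSpace ℝ (Fin n) → ℝ≥0∞ := fun x => (∑' j, g j x ^ q) ^ (1 / q) with hG
  set F : EuclideanSpace ℝ (Fin n) → ℝ≥0∞ := fun x => (∑' j, hlMax (g j) x ^ q) ^ (1 / q) with hF
  have hGm : Measurable G := (Measurable.tsum fun j => (hg j).pow_const _).pow_const _
  have hFm : Measurable F :=
    (Measurable.tsum fun j => (measurable_hlMax (g j)).pow_const _).pow_const _
  have hGq : ∀ x, G x ^ q = ∑' j, g j x ^ q := fun x => by
    rw [hG]; dsimp only; rw [← ENNReal.rpow_mul, one_div_mul_cancel hq0.ne', ENNReal.rpow_one]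
  have hFq : ∀ x, F x ^ q = ∑' j, hlMax (g j) x ^ q := fun x => by
    rw [hF]; dsimp only; rw [← ENNReal.rpow_mul, one_div_mul_cancel hq0.ne', ENNReal.rpow_one]
  have hwm := measurable_powW n α
  by_cases hG0 : G =ᵐ[volume] 0
  · -- `G` null forces every `g j`, hence `F`, to vanish
    have hF0 : ∀ x, F x = 0 := by
      intro x
      have hgj : ∀ j, hlMax (g j) x = 0 := by
        intro j
        rw [← nonpos_iff_eq_zero]
        refine hlMax_le fun r hr => ?_
        rw [mul_zero, nonpos_iff_eq_zero, lintegral_eq_zero_iff (hg j)]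
        refine ae_restrict_of_ae (hG0.mono fun y hy => ?_)
        have h1 : ∑' j, g j y ^ q = 0 := by rw [← hGq, hy]; simp [hq0]
        have h2 := ENNReal.tsum_eq_zero.1 h1 j
        simpa [ENNReal.rpow_eq_zero_iff, hq0, hq0.not_gt] using h2
      simp [hF, hgj, hq0]
    have hzero : ∫⁻ x, F x * (h x * powW n α x) = 0 := by
      simp only [hF0, zero_mul, lintegral_zero]
    exact hzero.le.trans zero_le
  obtain ⟨v, hvm, hGv, hvA, hvint⟩ := hR₂ (fun x => G x ^ (p / s)) (hGm.pow_const _)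
  obtain ⟨u, hum, hhu, huA, huint⟩ := hR₁ (fun x => h x * powW n α x) (hh.mul hwm)
  have hvint' : ∫⁻ x, v x ^ s * powW n α x ≤ C₂ * ∫⁻ x, G x ^ p * powW n α x := by
    refine hvint.trans_eq ?_
    congr 1
    refine lintegral_congr fun x => ?_
    rw [← ENNReal.rpow_mul, div_mul_cancel₀ _ hs0.ne']
  have huint' : ∫⁻ x, u x ^ p' * powW n β x ≤ C₁ * ∫⁻ x, h x ^ p' * powW n α x := by
    refine huint.trans_eq ?_
    congr 1
    refine lintegral_congr_ae ((ae_ne_zero hn).mono fun x hx => ?_)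
    dsimp only
    rw [ENNReal.mul_rpow_of_nonneg _ _ hp'0.le, mul_assoc, powW_rpow, powW_mul _ _ hx]
    congr 2
    rw [hβ, hp']; field_simp; ring
  have hGv' : ∀ x, G x ≤ v x ^ (s / p) := by
    intro x
    calc G x = (G x ^ (p / s)) ^ (s / p) := by
          rw [← ENNReal.rpow_mul, div_mul_div_cancel₀ hs0.ne', div_self hp0.ne', ENNReal.rpow_one]
      _ ≤ _ := by gcongr; exact hGv x
  have hv0 : ∀ x, v x ≠ 0 := by
    intro x hx
    apply hG0
    have h1 : hlMax v x = 0 := by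
      have := hvA x
      rwa [hx, mul_zero, nonpos_iff_eq_zero] at this
    filter_upwards [ae_zero_of_hlMax_eq_zero hvm h1] with y hy
    have := hGv' y
    rw [hy] at this
    simpa [ENNReal.zero_rpow_of_pos hsp0] using this
  have hvt : ∀ᵐ x, v x ≠ ⊤ := by
    have hlt : ∫⁻ x, v x ^ s * powW n α x ≠ ⊤ :=
      ne_top_of_le_ne_top (ENNReal.mul_ne_top ENNReal.coe_ne_top hfin) hvint'
    filter_upwards [ae_lt_top ((hvm.pow_const _).mul hwm) hlt, ae_ne_zero hn] with x hx hx0 htop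
    simp only [Pi.mul_apply] at hx
    rw [htop, ENNReal.top_rpow_of_pos hs0, ENNReal.top_mul (powW_ne_zero hx0)] at hx
    exact lt_irrefl _ hx
  set I := ∫⁻ x, u x * v x ^ (s / p) with hI
  -- Hölder's inequality in the `L^p(|x|^α)` duality
  have hIle : I ≤ (C₂ * ∫⁻ x, G x ^ p * powW n α x) ^ (1 / p) *
      (C₁ * ∫⁻ x, h x ^ p' * powW n α x) ^ (1 - 1 / p) := by
    have key := ENNReal.lintegral_mul_le_Lp_mul_Lq volume hpp'
      (f := fun x => v x ^ (s / p) * powW n (α / p) x) (g := fun x => u x * powW n (-(α / p)) x)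
      ((hvm.pow_const _).mul (measurable_powW _ _)).aemeasurable
      (hum.mul (measurable_powW _ _)).aemeasurable
    have e1 : I = ∫⁻ x, ((fun x => v x ^ (s / p) * powW n (α / p) x) *
        (fun x => u x * powW n (-(α / p)) x)) x := by
      refine lintegral_congr_ae ((ae_ne_zero hn).mono fun x hx => ?_)
      have : powW n (α / p) x * powW n (-(α / p)) x = 1 := by
        rw [powW_mul _ _ hx]; simp [powW]
      simp only [Pi.mul_apply]
      calc u x * v x ^ (s / p) = u x * v x ^ (s / p) *
            (powW n (α / p) x * powW n (-(α / p)) x) := by rw [this, mul_one]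
        _ = _ := by ring
    have e2 : ∀ x, (v x ^ (s / p) * powW n (α / p) x) ^ p = v x ^ s * powW n α x := by
      intro x
      rw [ENNReal.mul_rpow_of_nonneg _ _ hp0.le, ← ENNReal.rpow_mul, powW_rpow,
        div_mul_cancel₀ _ hp0.ne', div_mul_cancel₀ _ hp0.ne']
    have e3 : ∀ x, (u x * powW n (-(α / p)) x) ^ p' = u x ^ p' * powW n β x := by
      intro x
      rw [ENNReal.mul_rpow_of_nonneg _ _ hp'0.le, powW_rpow]
      congr 2
      rw [hβ, hp']; field_simp
    rw [← e1] at key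
    simp only [e2, e3, hip'] at key
    refine key.trans ?_
    have : 0 ≤ 1 - 1 / p := by rw [← hip']; positivity
    gcongr
  -- the scalar inequality at the exponent `q`, summed over `j`
  have hFI : ∫⁻ x, F x ^ q * (u x * v x ^ (-θ)) ≤ D * I := by
    have hm : Measurable fun x => u x * v x ^ (-θ) := by fun_prop
    have hmM : ∀ j, Measurable fun x => hlMax (g j) x ^ q * (u x * v x ^ (-θ)) :=
      fun j => ((measurable_hlMax (g j)).pow_const _).mul hm
    have hmg : ∀ j, Measurable fun x => g j x ^ q * (u x * v x ^ (-θ)) :=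
      fun j => ((hg j).pow_const _).mul hm
    calc ∫⁻ x, F x ^ q * (u x * v x ^ (-θ))
        = ∑' j, ∫⁻ x, hlMax (g j) x ^ q * (u x * v x ^ (-θ)) := by
          rw [← lintegral_tsum fun j => (hmM j).aemeasurable]
          exact lintegral_congr fun x => by rw [hFq, ENNReal.tsum_mul_right]
      _ ≤ ∑' j, D * ∫⁻ x, g j x ^ q * (u x * v x ^ (-θ)) :=
          ENNReal.tsum_le_tsum fun j => hD u v (g j) hum hvm (hg j)
            (Filter.Eventually.of_forall huA) (Filter.Eventually.of_forall hvA)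
            (hvt.mono fun x hx => ⟨hv0 x, hx⟩)
      _ = D * ∫⁻ x, G x ^ q * (u x * v x ^ (-θ)) := by
          rw [ENNReal.tsum_mul_left, ← lintegral_tsum fun j => (hmg j).aemeasurable]
          congr 1
          exact lintegral_congr fun x => by rw [hGq, ENNReal.tsum_mul_right]
      _ ≤ D * I := by
          refine mul_le_mul_right (lintegral_mono_ae (hvt.mono fun x hx => ?_)) _
          calc G x ^ q * (u x * v x ^ (-θ))
              ≤ (v x ^ (s / p)) ^ q * (u x * v x ^ (-θ)) := by gcongr; exact hGv' x
            _ = u x * (v x ^ (s / p * q) * v x ^ (-θ)) := by rw [← ENNReal.rpow_mul]; ring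
            _ = u x * v x ^ (s / p) := by
                rw [← ENNReal.rpow_add _ _ (hv0 x) hx]
                congr 2
                rw [hθ]; ring
  have hqq' : q.HolderConjugate (q / (q - 1)) := Real.HolderConjugate.conjExponent hq
  have hFu : ∫⁻ x, F x * u x ≤ (D * I) ^ (1 / q) * I ^ (1 - 1 / q) := by
    have hiq : 1 / (q / (q - 1)) = 1 - 1 / q := by field_simp
    have hiq0 : 0 < 1 - 1 / q := by rw [← hiq]; positivity
    have key := ENNReal.lintegral_mul_le_Lp_mul_Lq volume hqq'
      (f := fun x => F x * (u x ^ (1 / q) * v x ^ (-(θ / q))))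
      (g := fun x => u x ^ (1 - 1 / q) * v x ^ (θ / q))
      (by fun_prop) (by fun_prop)
    have e1 : ∫⁻ x, F x * u x = ∫⁻ x, ((fun x => F x * (u x ^ (1 / q) * v x ^ (-(θ / q)))) *
        (fun x => u x ^ (1 - 1 / q) * v x ^ (θ / q))) x := by
      refine lintegral_congr_ae (hvt.mono fun x hx => ?_)
      have h1 : v x ^ (-(θ / q)) * v x ^ (θ / q) = 1 := by
        rw [← ENNReal.rpow_add _ _ (hv0 x) hx]; simp
      have h2 : u x ^ (1 / q) * u x ^ (1 - 1 / q) = u x := by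
        rw [← ENNReal.rpow_add_of_nonneg _ _ (by positivity) hiq0.le]; simp
      simp only [Pi.mul_apply]
      calc F x * u x = F x * (u x ^ (1 / q) * u x ^ (1 - 1 / q)) *
            (v x ^ (-(θ / q)) * v x ^ (θ / q)) := by rw [h1, h2, mul_one]
        _ = _ := by ring
    have e2 : ∀ x, (F x * (u x ^ (1 / q) * v x ^ (-(θ / q)))) ^ q =
        F x ^ q * (u x * v x ^ (-θ)) := by
      intro x
      rw [ENNReal.mul_rpow_of_nonneg _ _ hq0.le, ENNReal.mul_rpow_of_nonneg _ _ hq0.le,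
        ← ENNReal.rpow_mul (u x), ← ENNReal.rpow_mul (v x), one_div_mul_cancel hq0.ne',
        ENNReal.rpow_one, neg_mul, div_mul_cancel₀ _ hq0.ne']
    have e3 : ∀ x, (u x ^ (1 - 1 / q) * v x ^ (θ / q)) ^ (q / (q - 1)) =
        u x * v x ^ (s / p) := by
      intro x
      have a1 : (1 - 1 / q) * (q / (q - 1)) = 1 := by field_simp
      have a2 : θ / q * (q / (q - 1)) = s / p := by rw [hθ]; field_simp
      rw [ENNReal.mul_rpow_of_nonneg _ _ (by positivity), ← ENNReal.rpow_mul, ← ENNReal.rpow_mul,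
        a1, a2, ENNReal.rpow_one]
    rw [← e1] at key
    simp only [e2, e3, hiq] at key
    refine key.trans ?_
    gcongr
  have hiq0 : 0 ≤ 1 - 1 / q := by rw [sub_nonneg, div_le_one hq0]; exact hq.le
  have hip0 : 0 ≤ 1 - 1 / p := by rw [sub_nonneg, div_le_one hp0]; exact hp.le
  calc ∫⁻ x, F x * (h x * powW n α x) ≤ ∫⁻ x, F x * u x := by
        refine lintegral_mono fun x => ?_
        exact mul_le_mul_right (hhu x) _
    _ ≤ (D * I) ^ (1 / q) * I ^ (1 - 1 / q) := hFu
    _ = (D : ℝ≥0∞) ^ (1 / q) * I := by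
        rw [ENNReal.mul_rpow_of_nonneg _ _ (by positivity), mul_assoc,
          ← ENNReal.rpow_add_of_nonneg _ _ (by positivity) hiq0]
        simp
    _ ≤ (D : ℝ≥0∞) ^ (1 / q) * ((C₂ * ∫⁻ x, G x ^ p * powW n α x) ^ (1 / p) *
      (C₁ * ∫⁻ x, h x ^ p' * powW n α x) ^ (1 - 1 / p)) := by gcongr
    _ = _ := by
        rw [ENNReal.mul_rpow_of_nonneg _ _ (by positivity : 0 ≤ 1 / p),
          ENNReal.mul_rpow_of_nonneg _ _ hip0]
        push_cast [ENNReal.coe_rpow_of_nonneg _ hip0,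
          ENNReal.coe_rpow_of_nonneg _ (by positivity : 0 ≤ 1 / p),
          ENNReal.coe_rpow_of_nonneg _ (by positivity : 0 ≤ 1 / q)]
        ring

/-- The vector-valued inequality for measurable `ℝ≥0∞`-valued functions. The dual estimate is
tested on `h = H ^ (p - 1)` for the truncations `H` of the left-hand side, whose norms are
finite. -/
lemma fefferman_stein_measurable {n : ℕ} (hn : 1 ≤ n) {p q α : ℝ} (hp : 1 < p) (hq : 1 < q)
    (hα1 : -(n : ℝ) < α) (hα2 : α < n * (p - 1)) :
    ∃ C : ℝ≥0, ∀ g : ℕ → EuclideanSpace ℝ (Fin n) → ℝ≥0∞, (∀ j, Measurable (g j)) →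
      (∫⁻ x, ((∑' j, hlMax (g j) x ^ q) ^ (1 / q)) ^ p * powW n α x) ^ (1 / p) ≤
        C * (∫⁻ x, ((∑' j, g j x ^ q) ^ (1 / q)) ^ p * powW n α x) ^ (1 / p) := by
  obtain ⟨C, hC⟩ := extrapolation hn hp hq hα1 hα2
  have hp0 : 0 < p := by linarith
  have hp1 : 0 < p - 1 := by linarith
  have hip0 : 0 < 1 / p := by positivity
  have hip1 : 0 < 1 - 1 / p := by rw [sub_pos, div_lt_one hp0]; exact hp
  refine ⟨C + 1, fun g hg => ?_⟩
  specialize hC g hg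
  set F : EuclideanSpace ℝ (Fin n) → ℝ≥0∞ := fun x => (∑' j, hlMax (g j) x ^ q) ^ (1 / q) with hF
  set Y := ∫⁻ x, ((∑' j, g j x ^ q) ^ (1 / q)) ^ p * powW n α x with hY
  have hFm : Measurable F :=
    (Measurable.tsum fun j => (measurable_hlMax (g j)).pow_const _).pow_const _
  have hwm := measurable_powW n α
  by_cases hYt : Y = ⊤
  · rw [hYt, ENNReal.top_rpow_of_pos hip0, ENNReal.mul_top (by simp)]
    exact le_top
  let H : ℕ → EuclideanSpace ℝ (Fin n) → ℝ≥0∞ := fun N =>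
    (Metric.ball 0 (N : ℝ)).indicator fun x => min (F x) N
  have hHm : ∀ N, Measurable (H N) := fun N =>
    (hFm.min measurable_const).indicator measurableSet_ball
  have hHF : ∀ N x, H N x ≤ F x := by
    intro N x
    refine (Set.indicator_le_self' (fun _ _ => zero_le) x).trans (min_le_left _ _)
  have hHmono : ∀ x, Monotone fun N => H N x := by
    intro x N N' hNN
    have hc : (N : ℝ) ≤ N' := by exact_mod_cast hNN
    have hc' : (N : ℝ≥0∞) ≤ N' := by exact_mod_cast hNN
    simp only [H]
    by_cases hx : x ∈ Metric.ball (0 : EuclideanSpace ℝ (Fin n)) (N : ℝ)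
    · rw [Set.indicator_of_mem hx, Set.indicator_of_mem (Metric.ball_subset_ball hc hx)]
      exact min_le_min_left _ hc'
    · rw [Set.indicator_of_notMem hx]; exact zero_le
  have hHsup : ∀ x, ⨆ N, H N x = F x := by
    intro x
    refine le_antisymm (iSup_le fun N => hHF N x) ?_
    refine le_of_forall_lt fun a ha => ?_
    obtain ⟨N₁, hN₁⟩ := ENNReal.exists_nat_gt (ne_top_of_lt ha)
    obtain ⟨N₂, hN₂⟩ := exists_nat_gt ‖x‖
    refine lt_of_lt_of_le ?_ (le_iSup _ (max N₁ N₂))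
    have hx : x ∈ Metric.ball (0 : EuclideanSpace ℝ (Fin n)) ((max N₁ N₂ : ℕ) : ℝ) := by
      rw [mem_ball_zero_iff]
      exact hN₂.trans_le (by exact_mod_cast le_max_right _ _)
    simp only [H]
    rw [Set.indicator_of_mem hx]
    exact lt_min ha (hN₁.trans_le (by exact_mod_cast le_max_left _ _))
  have hHle : ∀ N, ∫⁻ x, H N x ^ p * powW n α x ≤ (C * Y ^ (1 / p)) ^ p := by
    intro N
    set X := ∫⁻ x, H N x ^ p * powW n α x with hX
    have hXt : X ≠ ⊤ := by
      have : X ≤ (N : ℝ≥0∞) ^ p *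
          ∫⁻ x in Metric.ball (0 : EuclideanSpace ℝ (Fin n)) (N : ℝ), powW n α x := by
        rw [← lintegral_const_mul _ hwm, ← lintegral_indicator measurableSet_ball]
        refine lintegral_mono fun x => ?_
        by_cases hx : x ∈ Metric.ball (0 : EuclideanSpace ℝ (Fin n)) (N : ℝ)
        · simp only [H]
          rw [Set.indicator_of_mem hx, Set.indicator_of_mem hx]
          gcongr
          exact min_le_right _ _
        · simp only [H]
          rw [Set.indicator_of_notMem hx, Set.indicator_of_notMem hx,
            ENNReal.zero_rpow_of_pos hp0, zero_mul]
      refine ne_top_of_le_ne_top ?_ this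
      exact ENNReal.mul_ne_top (ENNReal.rpow_ne_top_of_nonneg hp0.le (ENNReal.natCast_ne_top N))
        (lintegral_powW_lt_top hn hα1 _).ne
    have h1 : X ≤ (C * Y ^ (1 / p)) * X ^ (1 - 1 / p) := by
      have key := hC (fun x => H N x ^ (p - 1)) ((hHm N).pow_const _) hYt
      have e : ∀ x, (H N x ^ (p - 1)) ^ (p / (p - 1)) = H N x ^ p := by
        intro x
        rw [← ENNReal.rpow_mul, mul_div_cancel₀ _ hp1.ne']
      simp only [e] at key
      rw [← mul_assoc] at key
      refine le_trans (lintegral_mono fun x => ?_) key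
      rw [← mul_assoc]
      gcongr
      calc H N x ^ p = H N x * H N x ^ (p - 1) := by
            conv_lhs => rw [show p = 1 + (p - 1) by ring]
            rw [ENNReal.rpow_add_of_nonneg _ _ zero_le_one hp1.le, ENNReal.rpow_one]
        _ ≤ F x * H N x ^ (p - 1) := by gcongr; exact hHF N x
    rcases eq_or_ne X 0 with hX0 | hX0
    · rw [hX0]; exact zero_le
    have hne : X ^ (1 - 1 / p) ≠ 0 := by simp [ENNReal.rpow_eq_zero_iff, hX0, hXt]
    have hne' : X ^ (1 - 1 / p) ≠ ⊤ := ENNReal.rpow_ne_top_of_nonneg hip1.le hXt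
    have h2 : X ^ (1 / p) * X ^ (1 - 1 / p) ≤ (C * Y ^ (1 / p)) * X ^ (1 - 1 / p) := by
      rw [← ENNReal.rpow_add_of_nonneg _ _ hip0.le hip1.le]
      simpa using h1
    have h3 : X ^ (1 / p) ≤ C * Y ^ (1 / p) := (ENNReal.mul_le_mul_iff_left hne hne').1 h2
    calc X = (X ^ (1 / p)) ^ p := by
          rw [← ENNReal.rpow_mul, one_div_mul_cancel hp0.ne', ENNReal.rpow_one]
      _ ≤ _ := by gcongr
  have hFint : ∫⁻ x, F x ^ p * powW n α x ≤ (C * Y ^ (1 / p)) ^ p := by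
    have e : ∀ x, F x ^ p * powW n α x = ⨆ N, H N x ^ p * powW n α x := by
      intro x
      rw [← ENNReal.iSup_mul, ← hHsup x,
        (ENNReal.monotone_rpow_of_nonneg hp0.le).map_iSup_of_continuousAt
        ENNReal.continuous_rpow_const.continuousAt (by simp [hp0])]
    simp_rw [e]
    have hm : ∀ N, Measurable fun x => H N x ^ p * powW n α x :=
      fun N => ((hHm N).pow_const _).mul hwm
    rw [lintegral_iSup hm]
    · exact iSup_le hHle
    · intro N N' hNN x
      dsimp only
      gcongr
      exact hHmono x hNN
  calc (∫⁻ x, F x ^ p * powW n α x) ^ (1 / p) ≤ ((C * Y ^ (1 / p)) ^ p) ^ (1 / p) := by gcongr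
    _ = C * Y ^ (1 / p) := by
        rw [← ENNReal.rpow_mul, mul_one_div_cancel hp0.ne', ENNReal.rpow_one]
    _ ≤ _ := by gcongr; simp

/-- Fefferman–Stein vector-valued maximal inequality in `L^p(ℝ^n, |·|^α)`
for `1 < p < ∞`, `1 < q < ∞` and `-n < α < n(p-1)`. -/
theorem fefferman_stein_weighted
    (n : ℕ) (hn : 1 ≤ n) (p q α : ℝ) (hp : 1 < p) (hq : 1 < q)
    (hα1 : -(n : ℝ) < α) (hα2 : α < n * (p - 1)) :
    ∃ C : ℝ, 0 < C ∧ ∀ f : ℕ → EuclideanSpace ℝ (Fin n) → ℝ,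
      (∀ j, LocallyIntegrable (f j) volume) →
      wLpE n p α (fun x => (∑' j : ℕ, maximalFn n (f j) x ^ q) ^ (1 / q)) ≤
        ENNReal.ofReal C *
          wLpE n p α (fun x => (∑' j : ℕ, (‖f j x‖₊ : ℝ≥0∞) ^ q) ^ (1 / q)) := by
  obtain ⟨C, hC⟩ := fefferman_stein_measurable hn hp hq hα1 hα2
  refine ⟨C + 1, by positivity, fun f hf => ?_⟩
  have hm : ∀ j, AEMeasurable (fun x => (‖f j x‖₊ : ℝ≥0∞)) volume := fun j =>
    (hf j).aestronglyMeasurable.enorm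
  -- both sides only depend on the almost everywhere classes of the `|f j|`
  have key := hC (fun j => (hm j).mk _) (fun j => (hm j).measurable_mk)
  have hae : ∀ᵐ x, ∀ j, (hm j).mk _ x = (‖f j x‖₊ : ℝ≥0∞) :=
    ae_all_iff.2 fun j => (hm j).ae_eq_mk.symm
  have e1 : ∀ j, hlMax ((hm j).mk _) = maximalFn n (f j) := fun j => by
    rw [maximalFn_eq_hlMax]; exact hlMax_congr_ae (hm j).ae_eq_mk.symm
  have e2 : ∫⁻ x, ((∑' j, (hm j).mk _ x ^ q) ^ (1 / q)) ^ p * powW n α x =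
      ∫⁻ x, ((∑' j, (‖f j x‖₊ : ℝ≥0∞) ^ q) ^ (1 / q)) ^ p * powW n α x :=
    lintegral_congr_ae (hae.mono fun x hx => by simp only [hx])
  simp only [e1] at key
  rw [e2] at key
  have hCC : (C : ℝ≥0∞) ≤ ENNReal.ofReal ((C : ℝ) + 1) := by
    rw [← ENNReal.ofReal_coe_nnreal]
    exact ENNReal.ofReal_le_ofReal (by linarith)
  exact key.trans (mul_le_mul_left hCC _)
end
end

section
/- Let n ≥ 1, let a < b be real numbers, let β > 0, λ ≥ 1 + 25√n, and let γ = ⌊(4√n(|a|+|b|))^{1/β}⌋ + 3. Then there exists v ∈ ℕ such that for all integers r, k ≥ max(v, γ) with r ≠ k, the sets P_k and P_r are disjoint. -/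
/-!
Only the first coordinate matters. For `k < r` a common point of `P_k` and `P_r` forces
`z_1^k - z_1^r < (|a| + |b|) / k^(λ+β)`, and `k ≥ γ` gives `4√n(|a|+|b|) < k^β`, so the right side
is at most `1/(4√n k^(λ-1)) · 1/k`. On the other hand `λ - 1 ≥ 2` and `r ≥ k + 1` give
`z_1^k - z_1^r ≥ 1/(4√n k^(λ-1)) · (1 - (k/(k+1))^2) ≥ 1/(4√n k^(λ-1)) · 1/k`. The threshold `γ`
alone therefore suffices, and `v = 0` works.
-/

open MeasureTheory

noncomputable section

/-- First coordinate of the center `z^k`: `z_1^1 = 0` and `z_1^k = 1/(4√n k^(λ-1))` for `k ≥ 2`. -/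
noncomputable def zOne (n : ℕ) (lam : ℝ) (k : ℕ) : ℝ :=
  if k = 1 then 0 else 1 / (4 * Real.sqrt n * (k : ℝ) ^ (lam - 1))

/-- The center `z^k = (z_1^k, 0, …, 0) ∈ ℝ^n`. -/
noncomputable def zVec (n : ℕ) (lam : ℝ) (k : ℕ) : EuclideanSpace ℝ (Fin n) :=
  (WithLp.equiv 2 (Fin n → ℝ)).symm (fun i => if i.val = 0 then zOne n lam k else 0)

/-- The parallelepiped `P_k`. -/
def Pset (n : ℕ) (a b β lam : ℝ) (k : ℕ) : Set (EuclideanSpace ℝ (Fin n)) :=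
  {x | (∀ i : Fin n, i.val ≠ 0 →
          1 / (16 * Real.sqrt n * (k : ℝ) ^ lam) ≤ x i ∧
            x i ≤ 1 / (2 * Real.sqrt n * (k : ℝ) ^ lam)) ∧
       ∀ i : Fin n, i.val = 0 →
          a / (k : ℝ) ^ (lam + β) < x i - zOne n lam k ∧
            x i - zOne n lam k < b / (k : ℝ) ^ (lam + β)}

/-- The smaller parallelepiped `P_k^*`. -/
def PsetStar (n : ℕ) (a b β lam : ℝ) (k : ℕ) : Set (EuclideanSpace ℝ (Fin n)) :=
  {x | (∀ i : Fin n, i.val ≠ 0 →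
          1 / (16 * Real.sqrt n * (k : ℝ) ^ lam) ≤ x i ∧
            x i ≤ 1 / (8 * Real.sqrt n * (k : ℝ) ^ lam)) ∧
       ∀ i : Fin n, i.val = 0 →
          a / (k : ℝ) ^ (lam + β) < x i - zOne n lam k ∧
            x i - zOne n lam k < (a + b) / (2 * (k : ℝ) ^ (lam + β))}

/-- The threshold `γ = ⌊(4√n(|a|+|b|))^(1/β)⌋ + 3`. -/
noncomputable def gammaConst (n : ℕ) (a b β : ℝ) : ℕ :=
  ⌊(4 * Real.sqrt n * (|a| + |b|)) ^ (1 / β)⌋₊ + 3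

/-- The defining property of the threshold `γ`. -/
lemma lt_rpow_of_gammaConst_le {n : ℕ} {a b β : ℝ} (hβ : 0 < β) {k : ℕ}
    (hk : gammaConst n a b β ≤ k) : 4 * Real.sqrt n * (|a| + |b|) < (k : ℝ) ^ β := by
  have hX : 0 ≤ 4 * Real.sqrt n * (|a| + |b|) := by positivity
  have h1 : (4 * Real.sqrt n * (|a| + |b|)) ^ (1 / β) < (k : ℝ) := by
    refine (Nat.floor_lt (by positivity)).1 ?_
    unfold gammaConst at hk
    omega
  have h2 := Real.rpow_lt_rpow (by positivity) h1 hβ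
  rwa [← Real.rpow_mul hX, one_div_mul_cancel hβ.ne', Real.rpow_one] at h2

/-- The center `z^k` is separated from all later ones by at least `z_1^k / k`. -/
lemma zOne_gap {n : ℕ} (hn : 1 ≤ n) {lam : ℝ} (hlam : 3 ≤ lam) {k r : ℕ} (hk : 2 ≤ k)
    (hkr : k < r) :
    1 / (4 * Real.sqrt n * (k : ℝ) ^ (lam - 1) * k) ≤ zOne n lam k - zOne n lam r := by
  have hD : 0 < 4 * Real.sqrt n := by
    have : 0 < Real.sqrt n := Real.sqrt_pos.2 (by exact_mod_cast hn)
    positivity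
  have hk' : (2 : ℝ) ≤ k := by exact_mod_cast hk
  have hr' : (k : ℝ) + 1 ≤ r := by exact_mod_cast hkr
  have hk0 : (0 : ℝ) < k := by linarith
  have hr0 : (0 : ℝ) < r := by linarith
  have hpow : ((r : ℝ) / k) ^ 2 ≤ (r : ℝ) ^ (lam - 1) / (k : ℝ) ^ (lam - 1) := by
    rw [← Real.div_rpow hr0.le hk0.le, ← Real.rpow_natCast]
    refine Real.rpow_le_rpow_of_exponent_le ?_ (by push_cast; linarith)
    rw [one_le_div hk0]
    linarith
  unfold zOne
  rw [if_neg (by omega), if_neg (by omega)]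
  have hp : 0 < (k : ℝ) ^ (lam - 1) := by positivity
  have hq : 0 < (r : ℝ) ^ (lam - 1) := by positivity
  generalize (k : ℝ) ^ (lam - 1) = p at *
  generalize (r : ℝ) ^ (lam - 1) = q at *
  generalize 4 * Real.sqrt n = D at *
  -- `(r/k)^2 ≥ ((k+1)/k)^2 ≥ k/(k-1)`, the last step being `k^2 - k - 1 ≥ 0`.
  have hsq : (k : ℝ) / (k - 1) ≤ q / p := by
    refine le_trans ?_ hpow
    rw [div_pow, div_le_div_iff₀ (by linarith) (by positivity)]
    have : ((k : ℝ) + 1) ^ 2 ≤ (r : ℝ) ^ 2 := by gcongr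
    nlinarith [mul_le_mul_of_nonneg_right this (by linarith : (0 : ℝ) ≤ k - 1)]
  rw [div_le_div_iff₀ (by linarith) hp] at hsq
  have key : 1 / (D * q) ≤ (k - 1) / (D * p * k) := by
    rw [div_le_div_iff₀ (by positivity) (by positivity)]
    nlinarith
  have : (k - 1) / (D * p * k) = 1 / (D * p) - 1 / (D * p * k) := by
    field_simp
  linarith

lemma Pset_inter_eq_empty_of_lt {n : ℕ} (hn : 1 ≤ n) {a b β lam : ℝ} (hβ : 0 < β)
    (hlam : 3 ≤ lam) {k r : ℕ} (hk : gammaConst n a b β ≤ k) (hkr : k < r) :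
    Pset n a b β lam k ∩ Pset n a b β lam r = ∅ := by
  rw [Set.eq_empty_iff_forall_notMem]
  rintro x ⟨hxk, hxr⟩
  have h1 := (hxk.2 ⟨0, hn⟩ rfl).1
  have h2 := (hxr.2 ⟨0, hn⟩ rfl).2
  have hk2 : 2 ≤ k := by
    unfold gammaConst at hk
    omega
  have hk0 : (0 : ℝ) < k := by exact_mod_cast (by omega : 0 < k)
  have hgap := zOne_gap hn hlam hk2 hkr
  have hB := lt_rpow_of_gammaConst_le hβ hk
  have hD : 0 < 4 * Real.sqrt n := by
    have : 0 < Real.sqrt n := Real.sqrt_pos.2 (by exact_mod_cast hn)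
    positivity
  have hmono : (k : ℝ) ^ (lam + β) ≤ (r : ℝ) ^ (lam + β) :=
    Real.rpow_le_rpow hk0.le (by exact_mod_cast hkr.le) (by linarith)
  have hP : 0 < (k : ℝ) ^ (lam + β) := by positivity
  have hb : b / (r : ℝ) ^ (lam + β) ≤ |b| / (k : ℝ) ^ (lam + β) :=
    div_le_div₀ (abs_nonneg b) (le_abs_self b) hP hmono
  have ha : -|a| / (k : ℝ) ^ (lam + β) ≤ a / (k : ℝ) ^ (lam + β) :=
    div_le_div_of_nonneg_right (neg_abs_le a) hP.le
  have hsplit : (k : ℝ) ^ (lam + β) = (k : ℝ) ^ (lam - 1) * k * (k : ℝ) ^ β := by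
    rw [show lam + β = lam - 1 + 1 + β by ring, Real.rpow_add hk0, Real.rpow_add hk0,
      Real.rpow_one]
  have hsmall : (|a| + |b|) / (k : ℝ) ^ (lam + β)
      ≤ 1 / (4 * Real.sqrt n * (k : ℝ) ^ (lam - 1) * k) := by
    have hp : 0 < (k : ℝ) ^ (lam - 1) * k := by positivity
    rw [div_le_div_iff₀ hP (by positivity), hsplit]
    nlinarith [mul_le_mul_of_nonneg_left hB.le hp.le]
  rw [add_div] at hsmall
  rw [neg_div] at ha
  linarith

/-- The sets `P_k` are pairwise disjoint for large indices. -/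
theorem Pset_pairwise_disjoint
    (n : ℕ) (hn : 1 ≤ n) (a b β lam : ℝ) (hab : a < b) (hβ : 0 < β)
    (hlam : 1 + 25 * Real.sqrt n ≤ lam) :
    ∃ v : ℕ, ∀ r k : ℕ, max v (gammaConst n a b β) ≤ r → max v (gammaConst n a b β) ≤ k →
      r ≠ k → Pset n a b β lam k ∩ Pset n a b β lam r = ∅ := by
  have hlam' : 3 ≤ lam := by
    have : 1 ≤ Real.sqrt n := Real.one_le_sqrt.2 (by exact_mod_cast hn)
    linarith
  refine ⟨0, fun r k hr hk hne => ?_⟩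
  rw [Nat.zero_max] at hr hk
  rcases lt_or_gt_of_ne hne with h | h
  · rw [Set.inter_comm]
    exact Pset_inter_eq_empty_of_lt hn hβ hlam' hr h
  · exact Pset_inter_eq_empty_of_lt hn hβ hlam' hk h
end
end

section
/- Let n ≥ 1, let a < b be real numbers, let β > 0, λ ≥ 1 + 25√n, T = b − a and γ = ⌊(4√n(|a|+|b|))^{1/β}⌋ + 3. Let k ≥ γ be an integer and let 0 < t < T/(8 k^{λ+β}). Then for every x ∈ P_k^*, every ℓ ∈ {0, 1, 2} and every h = (h_1, …, h_n) ∈ ℝ^n with 0 < h_i < t/√n for all i = 1, …, n, one has x + ℓh ∈ P_k. -/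
/-!
Adding `l • h` moves each coordinate up by at most `2 t / √n`. In the first coordinate this is less
than `(b - a) / (4 k^(λ+β))`, while `P_k` extends `(b - a) / (2 k^(λ+β))` beyond `P_k^*`.
In the other coordinates there is room `3 / (8 √n k^λ)`, and the displacement is less than
`(b - a) / (4 √n k^(λ+β)) ≤ 1 / (4 √n k^λ)`, because `k ≥ γ` forces `b - a ≤ k^β`
(`sub_le_rpow_of_gammaConst_le`).
-/

open MeasureTheory

noncomputable section

/-- The only consequence of `k ≥ γ` needed besides `k > 0`: the width `b - a` is absorbed by
`k^β`. -/
theorem sub_le_rpow_of_gammaConst_le {n : ℕ} (hn : 1 ≤ n) {a b β : ℝ} (hβ : 0 < β) {k : ℕ}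
    (hk : gammaConst n a b β ≤ k) : b - a ≤ (k : ℝ) ^ β := by
  have hs : 1 ≤ Real.sqrt n := Real.one_le_sqrt.mpr (by exact_mod_cast hn)
  have hc : 0 ≤ |a| + |b| := by positivity
  have hy : 0 ≤ 4 * Real.sqrt n * (|a| + |b|) := by positivity
  have hyk : (4 * Real.sqrt n * (|a| + |b|)) ^ (1 / β) ≤ (k : ℝ) := by
    have h1 := Nat.lt_floor_add_one ((4 * Real.sqrt n * (|a| + |b|)) ^ (1 / β))
    have h2 : ((gammaConst n a b β : ℕ) : ℝ) ≤ k := by exact_mod_cast hk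
    simp only [gammaConst] at h2
    push_cast at h2
    linarith
  have h3 := Real.rpow_le_rpow (by positivity) hyk hβ.le
  rw [← Real.rpow_mul hy, one_div_mul_cancel hβ.ne', Real.rpow_one] at h3
  have h4 : b - a ≤ |a| + |b| := by linarith [neg_abs_le a, le_abs_self b]
  nlinarith

/-- If `x ∈ P_k^*`, `0 < t < T/(8 k^(λ+β))` with `T = b - a`, and `0 < h_i < t/√n`
for all `i`, then `x + ℓ h ∈ P_k` for `ℓ = 0, 1, 2`. -/
theorem PsetStar_add_mem_Pset
    (n : ℕ) (hn : 1 ≤ n) (a b β lam : ℝ) (hab : a < b) (hβ : 0 < β)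
    (hlam : 1 + 25 * Real.sqrt n ≤ lam)
    (k : ℕ) (hk : gammaConst n a b β ≤ k)
    (t : ℝ) (ht0 : 0 < t) (ht : t < (b - a) / (8 * (k : ℝ) ^ (lam + β)))
    (x : EuclideanSpace ℝ (Fin n)) (hx : x ∈ PsetStar n a b β lam k)
    (l : ℕ) (hl : l ≤ 2) (h : EuclideanSpace ℝ (Fin n))
    (hh : ∀ i : Fin n, 0 < h i ∧ h i < t / Real.sqrt n) :
    x + (l : ℝ) • h ∈ Pset n a b β lam k := by
  have hs : 1 ≤ Real.sqrt n := Real.one_le_sqrt.mpr (by exact_mod_cast hn)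
  have hk0 : (0 : ℝ) < k := by
    have : 0 < k := by unfold gammaConst at hk; omega
    exact_mod_cast this
  have hB := sub_le_rpow_of_gammaConst_le hn hβ hk
  have hl2 : (l : ℝ) ≤ 2 := by exact_mod_cast hl
  have hl0 : (0 : ℝ) ≤ l := Nat.cast_nonneg l
  have hKpos : 0 < (k : ℝ) ^ lam := Real.rpow_pos_of_pos hk0 _
  have hBpos : 0 < (k : ℝ) ^ β := Real.rpow_pos_of_pos hk0 _
  have hKBpos : 0 < (k : ℝ) ^ (lam + β) := Real.rpow_pos_of_pos hk0 _
  have hspos : 0 < Real.sqrt n := by linarith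
  have hmove : ∀ i, 0 ≤ (l : ℝ) * h i ∧ (l : ℝ) * h i ≤ 2 * (t / Real.sqrt n) := fun i =>
    ⟨mul_nonneg hl0 (hh i).1.le, mul_le_mul hl2 (hh i).2.le (hh i).1.le (by norm_num)⟩
  obtain ⟨hx1, hx2⟩ := hx
  refine ⟨fun i hi => ?_, fun i hi => ?_⟩
  · obtain ⟨hlo, hup⟩ := hx1 i hi
    obtain ⟨hm0, hm⟩ := hmove i
    simp only [PiLp.add_apply, PiLp.smul_apply, smul_eq_mul]
    have ht' : t ≤ 1 / (8 * (k : ℝ) ^ lam) := by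
      refine ht.le.trans ?_
      rw [Real.rpow_add hk0, div_le_div_iff₀ (by positivity) (by positivity)]
      nlinarith [mul_le_mul_of_nonneg_left hB hKpos.le]
    have hts : t / Real.sqrt n ≤ 1 / (8 * (k : ℝ) ^ lam) / Real.sqrt n := by gcongr
    have e1 : 1 / (8 * (k : ℝ) ^ lam) / Real.sqrt n = 1 / (8 * Real.sqrt n * (k : ℝ) ^ lam) := by
      field_simp
    have e2 : 1 / (2 * Real.sqrt n * (k : ℝ) ^ lam)
        = 4 * (1 / (8 * Real.sqrt n * (k : ℝ) ^ lam)) := by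
      field_simp
      norm_num
    have hpos : 0 < 1 / (8 * Real.sqrt n * (k : ℝ) ^ lam) := by positivity
    rw [e1] at hts
    rw [e2]
    constructor <;> linarith
  · obtain ⟨hlo, hup⟩ := hx2 i hi
    obtain ⟨hm0, hm⟩ := hmove i
    simp only [PiLp.add_apply, PiLp.smul_apply, smul_eq_mul]
    have hts : t / Real.sqrt n ≤ t := div_le_self ht0.le hs
    have e : b / (k : ℝ) ^ (lam + β) = (a + b) / (2 * (k : ℝ) ^ (lam + β))
        + 4 * ((b - a) / (8 * (k : ℝ) ^ (lam + β))) := by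
      field_simp
      ring
    constructor <;> linarith
end
end
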